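/- arXiv:math-ph/9812026 — 6 statements merged into one kernel-verified Lean document; each statement's English description precedes it below -/
import Mathlib

section
/- Let N ≥ 1 and let c be a nonzero complex number. Let λ_1,…,λ_N and μ_1,…,μ_N be complex numbers such that the μ's are pairwise distinct, μ_k ≠ λ_j, μ_k − λ_j + ic ≠ 0 and λ_j − μ_k + ic ≠ 0 for all j,k, and λ_j − λ_m + ic ≠ 0 for all j,m. Define the N×N matrix M̃ by M̃_{jk} = t(μ_k, λ_j) + V_j · t(λ_j, μ_k), where V_j = ∏_{m=1}^{N} [(λ_j − μ_m + ic)(λ_m − λ_j + ic)] / [(μ_m − λ_j + ic)(λ_j − λ_m + ic)], and define the vector ξ by ξ_k = (∏_{m=1}^{N} (μ_k − λ_m)) / (∏_{m=1, m≠k}^{N} (μ_k − μ_m)). Then for every j = 1,…,N one has ∑_{k=1}^{N} M̃_{jk} ξ_k = 0; that is, ξ is an eigenvector of M̃ with eigenvalue zero. -/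
open Complex Finset Matrix

/-- The function `t(x,y) = -c² / ((x-y)(x-y+ic))` from the rational R-matrix. -/
noncomputable def tRat (c x y : ℂ) : ℂ := -c ^ 2 / ((x - y) * (x - y + I * c))

/-!
Write `L(z) = ∏ (z - λ_m)` and `P(z) = ∏ (z - μ_m)`, so that `ξ_k = L(μ_k) / P'(μ_k)`. As `L` and
`P` are monic of the same degree, the partial fraction expansion of `L / P` is
`L(z) / P(z) = 1 + ∑ ξ_k / (z - μ_k)` (`sum_residue_div`). Splitting
`t(x, y) = ic (1 / (x - y) - 1 / (x - y + ic))` reduces both halves of the row sum to this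
expansion at `z = λ_j` and `z = λ_j ∓ ic`, where `L(λ_j) = 0`:
`∑ t(μ_k, λ_j) ξ_k = ic L(λ_j - ic) / P(λ_j - ic)` and
`∑ t(λ_j, μ_k) ξ_k = -ic L(λ_j + ic) / P(λ_j + ic)`.
The factor `V_j` is exactly the ratio of `L(λ_j - ic) / P(λ_j - ic)` to
`L(λ_j + ic) / P(λ_j + ic)`, so the two halves cancel.
-/

/-- Partial fraction expansion of the quotient of the monic polynomials with roots `lam` and `mu`,
evaluated at a point `z` away from the poles. -/
theorem sum_residue_div {N : ℕ} (lam mu : Fin N → ℂ)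
    (hmu : ∀ k m : Fin N, k ≠ m → mu k ≠ mu m) (z : ℂ) (hz : ∀ k, z ≠ mu k) :
    ∑ k : Fin N, ((∏ m : Fin N, (mu k - lam m)) / ∏ m ∈ univ.erase k, (mu k - mu m)) / (mu k - z)
      = 1 - (∏ m : Fin N, (z - lam m)) / ∏ m : Fin N, (z - mu m) := by
  have hinj : Set.InjOn mu ((univ : Finset (Fin N)) : Set (Fin N)) := by
    intro a _ b _ hab
    by_contra hne
    exact hmu a b hne hab
  have hP : ∏ m : Fin N, (z - mu m) ≠ 0 := prod_ne_zero_iff.2 fun m _ => sub_ne_zero.2 (hz m)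
  have hdeg : (Lagrange.nodal univ lam - Lagrange.nodal univ mu).degree
      < #(univ : Finset (Fin N)) := by
    rw [← Lagrange.degree_nodal (s := univ) (v := lam)]
    apply Polynomial.degree_sub_lt_left
    · rw [Lagrange.degree_nodal, Lagrange.degree_nodal]
    · exact Lagrange.nodal_ne_zero
    · rw [(Lagrange.nodal_monic).leadingCoeff, (Lagrange.nodal_monic).leadingCoeff]
  have h := congrArg (Polynomial.eval z) (Lagrange.eq_interpolate hinj hdeg)
  rw [Lagrange.eval_interpolate_not_at_node _ (fun i _ => hz i)] at h
  simp only [Polynomial.eval_sub, Lagrange.eval_nodal] at h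
  have hsum : ∑ k : Fin N,
      ((∏ m : Fin N, (mu k - lam m)) / ∏ m ∈ univ.erase k, (mu k - mu m)) / (mu k - z)
      = -∑ i : Fin N, Lagrange.nodalWeight univ mu i * (z - mu i)⁻¹ *
        ((∏ m : Fin N, (mu i - lam m)) - ∏ m : Fin N, (mu i - mu m)) := by
    rw [← sum_neg_distrib]
    refine sum_congr rfl fun k _ => ?_
    rw [prod_eq_zero (f := fun m => mu k - mu m) (mem_univ k) (sub_self _), sub_zero,
      Lagrange.nodalWeight, prod_inv_distrib, ← neg_sub z (mu k), div_neg, div_eq_mul_inv,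
      div_eq_mul_inv]
    ring
  rw [hsum, ← mul_div_cancel_left₀ (∑ i : Fin N, _) hP, ← h, sub_div, div_self hP, neg_sub]

/-- Partial fractions for `tRat` in its first variable, with poles at `y` and `y - ic`. -/
theorem tRat_eq_left (c x y : ℂ) (h1 : x - y ≠ 0) (h2 : x - y + I * c ≠ 0) :
    tRat c x y = I * c * (1 / (x - y) - 1 / (x - (y - I * c))) := by
  have h3 : x - (y - I * c) = x - y + I * c := by ring
  rw [tRat, h3, div_sub_div _ _ h1 h2, ← mul_div_assoc]
  congr 1
  linear_combination (-c ^ 2) * I_sq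

/-- Partial fractions for `tRat` in its second variable, with poles at `x` and `x + ic`. -/
theorem tRat_eq_right (c x y : ℂ) (h1 : x - y ≠ 0) (h2 : x - y + I * c ≠ 0) :
    tRat c x y = -(I * c) * (1 / (y - x) - 1 / (y - (x + I * c))) := by
  rw [tRat_eq_left c x y h1 h2, ← neg_sub x y,
    show y - (x + I * c) = -(x - (y - I * c)) by ring, div_neg, div_neg]
  ring

/-- Appendix 1 (rational case): the vector ξ is a zero eigenvector of the matrix M̃. -/
theorem zero_eigenvector_rational (N : ℕ) (hN : 1 ≤ N) (c : ℂ) (hc : c ≠ 0)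
    (lam mu : Fin N → ℂ)
    (hmu : ∀ k m : Fin N, k ≠ m → mu k ≠ mu m)
    (hml : ∀ j k : Fin N, mu k ≠ lam j)
    (hmlc : ∀ j k : Fin N, mu k - lam j + I * c ≠ 0)
    (hlmc : ∀ j k : Fin N, lam j - mu k + I * c ≠ 0)
    (hllc : ∀ j m : Fin N, lam j - lam m + I * c ≠ 0) :
    ∀ j : Fin N,
      ∑ k : Fin N,
        (tRat c (mu k) (lam j) +
            (∏ m : Fin N,
              ((lam j - mu m + I * c) * (lam m - lam j + I * c)) /
                ((mu m - lam j + I * c) * (lam j - lam m + I * c))) *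
              tRat c (lam j) (mu k)) *
          ((∏ m : Fin N, (mu k - lam m)) / ∏ m ∈ univ.erase k, (mu k - mu m)) = 0 := by
  intro j
  set xi : Fin N → ℂ := fun k =>
    (∏ m : Fin N, (mu k - lam m)) / ∏ m ∈ univ.erase k, (mu k - mu m) with hxi
  have hL : ∏ m : Fin N, (lam j - lam m) = 0 := prod_eq_zero (mem_univ j) (sub_self _)
  have s0 : ∑ k, xi k / (mu k - lam j) = 1 := by
    rw [hxi, sum_residue_div lam mu hmu (lam j) fun k => (hml j k).symm, hL, zero_div, sub_zero]
  have s1 := sum_residue_div lam mu hmu (lam j - I * c) fun k h =>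
    hmlc j k (by rw [← h]; ring)
  have s2 := sum_residue_div lam mu hmu (lam j + I * c) fun k h =>
    hlmc j k (by rw [← h]; ring)
  have e1 : ∑ k, tRat c (mu k) (lam j) * xi k = I * c *
      ((∏ m : Fin N, (lam j - I * c - lam m)) / ∏ m : Fin N, (lam j - I * c - mu m)) := by
    have : ∑ k, tRat c (mu k) (lam j) * xi k = I * c *
        (∑ k, xi k / (mu k - lam j) - ∑ k, xi k / (mu k - (lam j - I * c))) := by
      rw [← sum_sub_distrib, mul_sum]
      refine sum_congr rfl fun k _ => ?_
      rw [tRat_eq_left c _ _ (sub_ne_zero.2 (hml j k)) (hmlc j k)]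
      ring
    rw [this, s0, s1]
    ring
  have e2 : ∑ k, tRat c (lam j) (mu k) * xi k = -(I * c) *
      ((∏ m : Fin N, (lam j + I * c - lam m)) / ∏ m : Fin N, (lam j + I * c - mu m)) := by
    have : ∑ k, tRat c (lam j) (mu k) * xi k = -(I * c) *
        (∑ k, xi k / (mu k - lam j) - ∑ k, xi k / (mu k - (lam j + I * c))) := by
      rw [← sum_sub_distrib, mul_sum]
      refine sum_congr rfl fun k _ => ?_
      rw [tRat_eq_right c _ _ (sub_ne_zero.2 (hml j k).symm) (hlmc j k)]
      ring
    rw [this, s0, s2]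
    ring
  have hV : (∏ m : Fin N,
        ((lam j - mu m + I * c) * (lam m - lam j + I * c)) /
          ((mu m - lam j + I * c) * (lam j - lam m + I * c))) *
      ((∏ m : Fin N, (lam j + I * c - lam m)) / ∏ m : Fin N, (lam j + I * c - mu m))
      = (∏ m : Fin N, (lam j - I * c - lam m)) / ∏ m : Fin N, (lam j - I * c - mu m) := by
    rw [← prod_div_distrib, ← prod_div_distrib, ← prod_mul_distrib]
    refine prod_congr rfl fun m _ => ?_
    have a1 := hlmc j m
    have a2 := hmlc j m
    have a3 := hllc j m
    rw [show lam j + I * c - lam m = lam j - lam m + I * c by ring,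
      show lam j + I * c - mu m = lam j - mu m + I * c by ring,
      show lam j - I * c - lam m = -(lam m - lam j + I * c) by ring,
      show lam j - I * c - mu m = -(mu m - lam j + I * c) by ring, neg_div_neg_eq]
    field_simp
  simp only [add_mul, mul_assoc, sum_add_distrib, ← mul_sum] at e1 e2 hV ⊢
  rw [e1, e2]
  linear_combination (-(I * c)) * hV
end

section
/- Let N ≥ 1 and let c be a nonzero complex number. Let λ_1,…,λ_N and μ_1,…,μ_N be complex numbers such that the λ's are pairwise distinct, the μ's are pairwise distinct, μ_k ≠ λ_j, μ_k − λ_j + ic ≠ 0 and λ_j − μ_k + ic ≠ 0 for all j,k, and λ_j − λ_m + ic ≠ 0 for all j ≠ m. Suppose ρ_1,…,ρ_N are complex numbers satisfying the Bethe equations ρ_j · ∏_{k=1, k≠j}^{N} f(λ_j, λ_k)/f(λ_k, λ_j) = 1 for every j. Define the N×N matrix M by M_{jk} = t(μ_k, λ_j) − ρ_j · t(λ_j, μ_k) · ∏_{m=1}^{N} f(λ_j, μ_m)/f(μ_m, λ_j). Then det M = 0. -/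
/-!
The determinant vanishes because `M` has the explicit nonzero null vector
`w k = ∏ m, (μ k - λ m) / ∏ m ≠ k, (μ k - μ m)`.

Put `a = I * c`, `P z = ∏ m ≠ j, (z - λ m)` and `Q z = ∏ m, (z - μ m)`. The factor `μ k - λ j` of
`w k` cancels against the one in the denominators of `t`, so each of the two parts of row `j` of
`M w` is a sum of the form `∑ k, P (μ k) / (Q' (μ k) * (z - μ k))`, taken at `z = λ j - a` and
`z = λ j + a`. As `deg P < N`, this sum is the partial fraction expansion of `P z / Q z`
(`sum_nodalWeight_mul_prod_eq`). Row `j` of `M w` is therefore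
`-a ^ 2 * (P (λ j - a) / Q (λ j - a) - R * P (λ j + a) / Q (λ j + a))`, where
`R = ρ j * Q (λ j + a) / Q (λ j - a)`, and it vanishes because the Bethe equation says
`ρ j * P (λ j + a) = P (λ j - a)`.
-/

open Complex Finset Matrix

/-- The function `f(x,y) = (x-y+ic)/(x-y)` from the rational R-matrix. -/
noncomputable def fRat (c x y : ℂ) : ℂ := (x - y + I * c) / (x - y)

/-- Partial fraction expansion of `∏ m ∈ s, (z - lam m) / ∏ m, (z - mu m)` when the numerator has
smaller degree than the denominator; this is Lagrange interpolation of the numerator at the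
nodes `mu`. -/
lemma sum_nodalWeight_mul_prod_eq {N : ℕ} (lam mu : Fin N → ℂ) (hmu : Function.Injective mu)
    (s : Finset (Fin N)) (hs : s.card < N) (z : ℂ) (hz : ∀ k, z ≠ mu k) :
    ∑ k, Lagrange.nodalWeight univ mu k * (z - mu k)⁻¹ * ∏ m ∈ s, (mu k - lam m) =
      (∏ m ∈ s, (z - lam m)) / ∏ m, (z - mu m) := by
  have hdeg : (Lagrange.nodal s lam).degree < (univ : Finset (Fin N)).card := by
    rw [Lagrange.degree_nodal, card_univ, Fintype.card_fin]
    exact_mod_cast hs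
  have h := congrArg (Polynomial.eval z)
    (Lagrange.eq_interpolate (s := univ) (v := mu) hmu.injOn hdeg)
  rw [Lagrange.eval_interpolate_not_at_node _ (fun k _ => hz k)] at h
  simp only [Lagrange.eval_nodal] at h
  have hQ : ∏ m, (z - mu m) ≠ 0 := prod_ne_zero_iff.2 fun m _ => sub_ne_zero.2 (hz m)
  rw [eq_div_iff hQ, h, mul_comm]

/-- The quotient `f(x,y) / f(y,x)` in terms of differences. -/
lemma fRat_div_fRat_swap (c x y : ℂ) (h : x ≠ y) :
    fRat c x y / fRat c y x = (x + I * c - y) / (x - I * c - y) := by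
  have h1 : x - y ≠ 0 := sub_ne_zero.2 h
  have h2 : y - x = -(x - y) := by ring
  have h3 : y - x + I * c = -(x - I * c - y) := by ring
  rw [fRat, fRat, h3, h2, neg_div_neg_eq, div_div_div_cancel_right₀ h1]
  congr 1
  ring

/-- Orthogonality of distinct Bethe eigenstates (rational case): if the parameters λ
satisfy the Bethe equations with `r(λ_j) = ρ_j`, then the scalar-product matrix M
has vanishing determinant. -/
theorem det_scalar_product_matrix_eq_zero_rational (N : ℕ) (hN : 1 ≤ N) (c : ℂ) (hc : c ≠ 0)
    (lam mu : Fin N → ℂ)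
    (hlam : ∀ j k : Fin N, j ≠ k → lam j ≠ lam k)
    (hmu : ∀ k m : Fin N, k ≠ m → mu k ≠ mu m)
    (hml : ∀ j k : Fin N, mu k ≠ lam j)
    (hmlc : ∀ j k : Fin N, mu k - lam j + I * c ≠ 0)
    (hlmc : ∀ j k : Fin N, lam j - mu k + I * c ≠ 0)
    (hllc : ∀ j m : Fin N, j ≠ m → lam j - lam m + I * c ≠ 0)
    (ρ : Fin N → ℂ)
    (hBethe : ∀ j : Fin N,
      ρ j * ∏ k ∈ univ.erase j, fRat c (lam j) (lam k) / fRat c (lam k) (lam j) = 1) :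
    Matrix.det (Matrix.of fun j k : Fin N =>
      tRat c (mu k) (lam j) -
        ρ j * tRat c (lam j) (mu k) *
          ∏ m : Fin N, fRat c (lam j) (mu m) / fRat c (mu m) (lam j)) = 0 := by
  have hinj : Function.Injective mu := fun k m h => by
    by_contra hne
    exact hmu k m hne h
  let w : Fin N → ℂ := fun k => Lagrange.nodalWeight univ mu k * ∏ m, (mu k - lam m)
  refine Matrix.exists_mulVec_eq_zero_iff.1 ⟨w, fun hw => ?_, funext fun j => ?_⟩
  · refine mul_ne_zero (Lagrange.nodalWeight_ne_zero hinj.injOn (mem_univ _)) ?_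
      (congrFun hw ⟨0, hN⟩)
    exact prod_ne_zero_iff.2 fun m _ => sub_ne_zero.2 (hml m _)
  have hz0 : ∀ k, lam j - I * c ≠ mu k := fun k h => hmlc j k (by rw [← h]; ring)
  have hz1 : ∀ k, lam j + I * c ≠ mu k := fun k h => hlmc j k (by rw [← h]; ring)
  have hcard : (univ.erase j).card < N := by
    simpa using card_erase_lt_of_mem (mem_univ j)
  have e0 := sum_nodalWeight_mul_prod_eq lam mu hinj (univ.erase j) hcard _ hz0
  have e1 := sum_nodalWeight_mul_prod_eq lam mu hinj (univ.erase j) hcard _ hz1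
  have hQ0 : ∏ m, (lam j - I * c - mu m) ≠ 0 :=
    prod_ne_zero_iff.2 fun m _ => sub_ne_zero.2 (hz0 m)
  have hQ1 : ∏ m, (lam j + I * c - mu m) ≠ 0 :=
    prod_ne_zero_iff.2 fun m _ => sub_ne_zero.2 (hz1 m)
  have hP0 : ∏ m ∈ univ.erase j, (lam j - I * c - lam m) ≠ 0 :=
    prod_ne_zero_iff.2 fun m hm h =>
      hllc m j (ne_of_mem_erase hm) (by linear_combination -h)
  have hB : ρ j * ∏ m ∈ univ.erase j, (lam j + I * c - lam m) =
      ∏ m ∈ univ.erase j, (lam j - I * c - lam m) := by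
    have h := hBethe j
    rw [prod_congr rfl fun k hk =>
      fRat_div_fRat_swap c _ _ (hlam j k (ne_of_mem_erase hk).symm),
      prod_div_distrib, ← mul_div_assoc, div_eq_one_iff_eq hP0] at h
    exact h
  have hR : ∏ m, fRat c (lam j) (mu m) / fRat c (mu m) (lam j) =
      (∏ m, (lam j + I * c - mu m)) / ∏ m, (lam j - I * c - mu m) := by
    rw [prod_congr rfl fun m _ => fRat_div_fRat_swap c _ _ (hml j m).symm, prod_div_distrib]
  have ha : -c ^ 2 = (I * c) ^ 2 := by rw [mul_pow, I_sq]; ring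
  -- The factor `mu k - lam j` of `w k` cancels, leaving one simple pole in each half of the entry.
  have t0 : ∀ k, tRat c (mu k) (lam j) * w k = -(I * c) ^ 2 *
      (Lagrange.nodalWeight univ mu k * (lam j - I * c - mu k)⁻¹ *
        ∏ m ∈ univ.erase j, (mu k - lam m)) := fun k => by
    have h1 : mu k - lam j ≠ 0 := sub_ne_zero.2 (hml j k)
    have h2 := hmlc j k
    have h3 : lam j - I * c - mu k = -(mu k - lam j + I * c) := by ring
    simp only [w, tRat]
    rw [← mul_prod_erase univ (fun m => mu k - lam m) (mem_univ j), h3, ha]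
    field_simp
  have t1 : ∀ k, tRat c (lam j) (mu k) * w k = -(I * c) ^ 2 *
      (Lagrange.nodalWeight univ mu k * (lam j + I * c - mu k)⁻¹ *
        ∏ m ∈ univ.erase j, (mu k - lam m)) := fun k => by
    have h1 : mu k - lam j ≠ 0 := sub_ne_zero.2 (hml j k)
    have h2 := hlmc j k
    have h3 : lam j + I * c - mu k = lam j - mu k + I * c := by ring
    have h4 : lam j - mu k = -(mu k - lam j) := by ring
    simp only [w, tRat]
    rw [← mul_prod_erase univ (fun m => mu k - lam m) (mem_univ j), h3, ha]
    generalize lam j - mu k + I * c = d at h2 ⊢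
    rw [h4]
    field_simp
  simp only [mulVec, dotProduct, of_apply, Pi.zero_apply]
  rw [hR]
  generalize (∏ m, (lam j + I * c - mu m)) = Q1 at *
  generalize (∏ m, (lam j - I * c - mu m)) = Q0 at *
  calc _ = ∑ k, (tRat c (mu k) (lam j) * w k -
        ρ j * (Q1 / Q0) * (tRat c (lam j) (mu k) * w k)) :=
        sum_congr rfl fun k _ => by ring
    _ = 0 := by
        simp only [t0, t1]
        rw [sum_sub_distrib, ← mul_sum, ← mul_sum, ← mul_sum, e0, e1, ← hB]
        field_simp
        ring
end

section
/- Let N ≥ 1 and let γ be a complex number with sin γ ≠ 0. Let λ_1,…,λ_N and μ_1,…,μ_N be complex numbers such that sinh(μ_k − μ_m) ≠ 0 for k ≠ m, and for all j,k: sinh(μ_k − λ_j) ≠ 0, sinh(μ_k − λ_j + iγ) ≠ 0, sinh(λ_j − μ_k + iγ) ≠ 0, and sinh(λ_j − λ_m + iγ) ≠ 0 for all j,m. Define the N×N matrix M̃ by M̃_{jk} = t(μ_k, λ_j) + V_j · t(λ_j, μ_k), where t(x,y) = −sin²γ / (sinh(x−y) sinh(x−y+iγ)), V_j = ∏_{m=1}^{N}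 [sinh(λ_j − μ_m + iγ) sinh(λ_m − λ_j + iγ)] / [sinh(μ_m − λ_j + iγ) sinh(λ_j − λ_m + iγ)], and define ξ_k = (∏_{m=1}^{N} sinh(μ_k − λ_m)) / (∏_{m=1, m≠k}^{N} sinh(μ_k − μ_m)). Then for every j = 1,…,N one has ∑_{k=1}^{N} M̃_{jk} ξ_k = 0. -/
/-!
Fix `j` and write `c = iγ`. The factor `sinh (μₖ - λⱼ)` of `ξₖ` cancels the same factor in
`t(μₖ, λⱼ)` and in `t(λⱼ, μₖ)`, so each of the two parts of `∑ₖ M̃ⱼₖ ξₖ` is, up to a constant, of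
the form `∑ₖ ∏_{m ≠ j} sinh (μₖ - λₘ) / (sinh (μₖ - w) ∏_{l ≠ k} sinh (μₖ - μₗ))`, with
`w = λⱼ - c` and `w = λⱼ + c` respectively. Lagrange interpolation at the nodes `μₖ`
(`sinh_lagrange`) evaluates this sum in closed form (`sum_sinh_div`), and the factor `Vⱼ` is exactly
the ratio that makes the two values cancel.
-/

open Complex Finset Matrix

/-- The function `t(x,y) = -sin²γ / (sinh(x-y) sinh(x-y+iγ))` from the trigonometric
(XXZ) R-matrix. -/
noncomputable def tTrig (γ x y : ℂ) : ℂ :=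
  -(Complex.sin γ) ^ 2 / (Complex.sinh (x - y) * Complex.sinh (x - y + I * γ))

/-- The substitution `z = e^{2x}` turns `sinh (x - a)` into the difference `e^{2x} - e^{2a}`,
up to an exponential factor. -/
lemma sinh_sub_eq_exp (x a : ℂ) :
    sinh (x - a) = (exp (2 * x) - exp (2 * a)) * ((2 * exp x)⁻¹ * (exp a)⁻¹) := by
  have hx := exp_ne_zero x
  have ha := exp_ne_zero a
  rw [Complex.sinh, neg_sub, exp_sub, exp_sub, two_mul, two_mul, exp_add, exp_add]
  field_simp

/-- Hyperbolic Lagrange interpolation: a product of `n - 1` shifted hyperbolic sines is determined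
by its values at `n` nodes. In the variable `z = e^{2x}` it is a polynomial of degree `n - 1`, up to
an exponential prefactor that the interpolation basis shares, as it has the same number of
factors. -/
lemma sinh_lagrange {ι κ : Type*} [DecidableEq ι] (s : Finset ι) (T : Finset κ)
    (hT : #T + 1 = #s) (x : ι → ℂ) (a : κ → ℂ)
    (hx : ∀ k ∈ s, ∀ l ∈ s, k ≠ l → sinh (x k - x l) ≠ 0) (w : ℂ) :
    ∏ m ∈ T, sinh (w - a m) =
      ∑ k ∈ s, (∏ m ∈ T, sinh (x k - a m)) *
        ∏ l ∈ s.erase k, (sinh (w - x l) / sinh (x k - x l)) := by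
  have hinj : Set.InjOn (fun k => exp (2 * x k)) s := by
    intro k hk l hl hkl
    by_contra hne
    apply hx k hk l hl hne
    rw [sinh_sub_eq_exp]
    simp only at hkl
    rw [hkl, sub_self, zero_mul]
  set P : Polynomial ℂ := ∏ m ∈ T, (Polynomial.X - Polynomial.C (exp (2 * a m))) with hP
  have hdeg : P.degree < #s := by
    rw [hP, Polynomial.degree_prod]
    simp only [Polynomial.degree_X_sub_C, sum_const, nsmul_eq_mul, mul_one]
    exact_mod_cast (by omega : #T < #s)
  have hev : ∀ y, P.eval y = ∏ m ∈ T, (y - exp (2 * a m)) := by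
    intro y
    simp [hP, Polynomial.eval_prod]
  have key := congrArg (Polynomial.eval (exp (2 * w))) (Lagrange.eq_interpolate hinj hdeg)
  rw [Lagrange.interpolate_apply, Polynomial.eval_finsetSum, hev] at key
  have hnum : ∀ y, ∏ m ∈ T, sinh (y - a m) =
      (∏ m ∈ T, (exp (2 * y) - exp (2 * a m))) *
        ((2 * exp y)⁻¹ ^ #T * ∏ m ∈ T, (exp (a m))⁻¹) := by
    intro y
    simp only [sinh_sub_eq_exp y, prod_mul_distrib, prod_const]
  rw [hnum w, key, sum_mul]
  refine sum_congr rfl fun k hk => ?_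
  have hcard : #(s.erase k) = #T := by rw [card_erase_of_mem hk]; omega
  have hbasis : ∏ l ∈ s.erase k, (sinh (w - x l) / sinh (x k - x l)) =
      (∏ l ∈ s.erase k, ((exp (2 * x k) - exp (2 * x l))⁻¹ * (exp (2 * w) - exp (2 * x l)))) *
        ((2 * exp w)⁻¹ ^ #T * (2 * exp (x k)) ^ #T) := by
    rw [← hcard, ← prod_const, ← prod_const, ← prod_mul_distrib, ← prod_mul_distrib]
    refine prod_congr rfl fun l hl => ?_
    have h1 := exp_ne_zero (x l)
    have h2 := exp_ne_zero (x k)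
    have h3 := exp_ne_zero w
    have h4 : exp (2 * x k) - exp (2 * x l) ≠ 0 := by
      intro h0
      apply hx k hk l (mem_of_mem_erase hl) (ne_of_mem_erase hl).symm
      rw [sinh_sub_eq_exp, h0, zero_mul]
    rw [sinh_sub_eq_exp, sinh_sub_eq_exp]
    field_simp
  rw [hbasis, hnum (x k), Polynomial.eval_mul, Polynomial.eval_C, hev, Lagrange.basis,
    Polynomial.eval_prod]
  simp only [Lagrange.basisDivisor, Polynomial.eval_mul, Polynomial.eval_C, Polynomial.eval_sub,
    Polynomial.eval_X]
  have h2 : (2 * exp (x k))⁻¹ ^ #T * (2 * exp (x k)) ^ #T = 1 := by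
    rw [← mul_pow, inv_mul_cancel₀ (by simp), one_pow]
  linear_combination (-(∏ m ∈ T, (exp (2 * x k) - exp (2 * a m))) *
    (∏ l ∈ s.erase k, ((exp (2 * x k) - exp (2 * x l))⁻¹ * (exp (2 * w) - exp (2 * x l)))) *
    (2 * exp w)⁻¹ ^ #T * ∏ m ∈ T, (exp (a m))⁻¹) * h2

/-- The partial fraction form of `sinh_lagrange`, for `w` away from the nodes. -/
lemma sum_sinh_div {ι κ : Type*} [DecidableEq ι] (s : Finset ι) (T : Finset κ)
    (hT : #T + 1 = #s) (x : ι → ℂ) (a : κ → ℂ)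
    (hx : ∀ k ∈ s, ∀ l ∈ s, k ≠ l → sinh (x k - x l) ≠ 0) (w : ℂ)
    (hw : ∀ k ∈ s, sinh (x k - w) ≠ 0) :
    ∑ k ∈ s, (∏ m ∈ T, sinh (x k - a m)) /
        (sinh (x k - w) * ∏ l ∈ s.erase k, sinh (x k - x l)) =
      (∏ m ∈ T, sinh (a m - w)) / ∏ l ∈ s, sinh (x l - w) := by
  have hflip : ∀ y z : ℂ, sinh (y - z) = -1 * sinh (z - y) := by
    intro y z
    rw [← neg_sub, sinh_neg, neg_one_mul]
  have hL := sinh_lagrange s T hT x a hx w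
  have hlhs : ∏ m ∈ T, sinh (w - a m) = (-1) ^ #T * ∏ m ∈ T, sinh (a m - w) := by
    simp only [hflip w, prod_mul_distrib, prod_const]
  have hsq : ((-1 : ℂ) ^ #T) * (-1) ^ #T = 1 := by rw [← mul_pow]; simp
  have hall : ∏ l ∈ s, sinh (x l - w) ≠ 0 := prod_ne_zero_iff.mpr hw
  rw [eq_div_iff hall, ← one_mul (∏ m ∈ T, sinh (a m - w)), ← hsq, mul_assoc, ← hlhs, hL, sum_mul,
    mul_sum]
  refine sum_congr rfl fun k hk => ?_
  have hcard : #(s.erase k) = #T := by rw [card_erase_of_mem hk]; omega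
  have hd : ∏ l ∈ s.erase k, sinh (x k - x l) ≠ 0 :=
    prod_ne_zero_iff.mpr fun l hl => hx k hk l (mem_of_mem_erase hl) (ne_of_mem_erase hl).symm
  have hk0 := hw k hk
  simp only [hflip w]
  rw [← mul_prod_erase s _ hk, prod_div_distrib, prod_mul_distrib, prod_const, hcard]
  field_simp
  linear_combination (-(∏ m ∈ T, sinh (x k - a m)) * ∏ l ∈ s.erase k, sinh (x l - w)) * hsq

/-- Appendix 1 (trigonometric case): the vector ξ is a zero eigenvector of the matrix M̃. -/
theorem zero_eigenvector_trigonometric (N : ℕ) (hN : 1 ≤ N) (γ : ℂ)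
    (hγ : Complex.sin γ ≠ 0)
    (lam mu : Fin N → ℂ)
    (hmu : ∀ k m : Fin N, k ≠ m → Complex.sinh (mu k - mu m) ≠ 0)
    (hml : ∀ j k : Fin N, Complex.sinh (mu k - lam j) ≠ 0)
    (hmlc : ∀ j k : Fin N, Complex.sinh (mu k - lam j + I * γ) ≠ 0)
    (hlmc : ∀ j k : Fin N, Complex.sinh (lam j - mu k + I * γ) ≠ 0)
    (hllc : ∀ j m : Fin N, Complex.sinh (lam j - lam m + I * γ) ≠ 0) :
    ∀ j : Fin N,
      ∑ k : Fin N,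
        (tTrig γ (mu k) (lam j) +
            (∏ m : Fin N,
              (Complex.sinh (lam j - mu m + I * γ) * Complex.sinh (lam m - lam j + I * γ)) /
                (Complex.sinh (mu m - lam j + I * γ) * Complex.sinh (lam j - lam m + I * γ))) *
              tTrig γ (lam j) (mu k)) *
          ((∏ m : Fin N, Complex.sinh (mu k - lam m)) /
            ∏ m ∈ univ.erase k, Complex.sinh (mu k - mu m)) = 0 := by
  intro j
  set c := I * γ with hc
  have hcard : #(univ.erase j) + 1 = #(univ : Finset (Fin N)) :=
    card_erase_add_one (mem_univ j)
  have hlmc' : ∀ k, sinh (mu k - lam j - c) ≠ 0 := by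
    intro k h
    apply hlmc j k
    rw [← neg_eq_zero, ← sinh_neg, ← h]
    congr 1
    ring
  have hneg : ∀ k, sinh (lam j - mu k) * sinh (lam j - mu k + c) =
      sinh (mu k - lam j) * sinh (mu k - lam j - c) := by
    intro k
    rw [← neg_sub (mu k) (lam j), sinh_neg,
      show -(mu k - lam j) + c = -(mu k - lam j - c) by ring, sinh_neg, neg_mul_neg]
  have hsplit : ∀ k, ∏ m, sinh (mu k - lam m) =
      sinh (mu k - lam j) * ∏ m ∈ univ.erase j, sinh (mu k - lam m) :=
    fun k => (mul_prod_erase univ _ (mem_univ j)).symm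
  have hA := sum_sinh_div univ (univ.erase j) hcard mu lam (fun k _ l _ h => hmu k l h)
    (lam j - c) (fun k _ => by rw [← sub_add]; exact hmlc j k)
  have hB := sum_sinh_div univ (univ.erase j) hcard mu lam (fun k _ l _ h => hmu k l h)
    (lam j + c) (fun k _ => by rw [← sub_sub]; exact hlmc' k)
  simp only [← sub_add] at hA
  simp only [← sub_sub] at hB
  set V := ∏ m, (sinh (lam j - mu m + c) * sinh (lam m - lam j + c)) /
    (sinh (mu m - lam j + c) * sinh (lam j - lam m + c)) with hV
  -- The diagonal factor `m = j` of the `λ`-part of `Vⱼ` is `sinh c / sinh c = 1`.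
  have hVB : V * ((∏ m ∈ univ.erase j, sinh (lam m - lam j - c)) /
      ∏ l, sinh (mu l - lam j - c)) =
      -((∏ m ∈ univ.erase j, sinh (lam m - lam j + c)) / ∏ l, sinh (mu l - lam j + c)) := by
    have e : ∀ y : ℂ, sinh (y - lam j - c) = -1 * sinh (lam j - y + c) := by
      intro y
      rw [show y - lam j - c = -(lam j - y + c) by ring, sinh_neg, neg_one_mul]
    have h1 : ∏ l, sinh (lam j - mu l + c) ≠ 0 := prod_ne_zero_iff.mpr fun l _ => hlmc j l
    have h2 : ∏ l, sinh (mu l - lam j + c) ≠ 0 := prod_ne_zero_iff.mpr fun l _ => hmlc j l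
    have h3 : ∏ m ∈ univ.erase j, sinh (lam j - lam m + c) ≠ 0 :=
      prod_ne_zero_iff.mpr fun m _ => hllc j m
    have h4 := hllc j j
    have h5 : (-1 : ℂ) ^ #(univ.erase j) ≠ 0 := pow_ne_zero _ (by norm_num)
    simp only [hV, e, prod_div_distrib, prod_mul_distrib, prod_const]
    rw [← hcard, pow_succ, ← mul_prod_erase univ (fun m => sinh (lam m - lam j + c)) (mem_univ j),
      ← mul_prod_erase univ (fun m => sinh (lam j - lam m + c)) (mem_univ j)]
    generalize sinh (lam j - lam j + c) = d at h4 ⊢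
    field_simp
  have hterm : ∀ k, (tTrig γ (mu k) (lam j) + V * tTrig γ (lam j) (mu k)) *
      ((∏ m, sinh (mu k - lam m)) / ∏ m ∈ univ.erase k, sinh (mu k - mu m)) =
      -(sin γ) ^ 2 * ((∏ m ∈ univ.erase j, sinh (mu k - lam m)) /
          (sinh (mu k - lam j + c) * ∏ l ∈ univ.erase k, sinh (mu k - mu l)) +
        V * ((∏ m ∈ univ.erase j, sinh (mu k - lam m)) /
          (sinh (mu k - lam j - c) * ∏ l ∈ univ.erase k, sinh (mu k - mu l)))) := by
    intro k
    have h0 := hml j k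
    have h1 := hmlc j k
    have h2 := hlmc' k
    have h3 : ∏ l ∈ univ.erase k, sinh (mu k - mu l) ≠ 0 :=
      prod_ne_zero_iff.mpr fun l hl => hmu k l (ne_of_mem_erase hl).symm
    rw [tTrig, tTrig, ← hc, hneg, hsplit]
    field_simp
    ring
  rw [sum_congr rfl fun k _ => hterm k, ← mul_sum, sum_add_distrib, ← mul_sum, hA, hB, hVB,
    add_neg_cancel, mul_zero]
end

section
/- Let N ≥ 1 and let γ be a complex number with sin γ ≠ 0. Let λ_1,…,λ_N and μ_1,…,μ_N be complex numbers such that sinh(μ_k − μ_m) ≠ 0 for k ≠ m, and for all j,k: sinh(μ_k − λ_j) ≠ 0, sinh(μ_k − λ_j + iγ) ≠ 0, sinh(λ_j − μ_k + iγ) ≠ 0, and sinh(λ_j − λ_m + iγ) ≠ 0 for all j,m. Define the N×N matrix M̃ by M̃_{jk} = t(μ_k, λ_j) + V_j · t(λ_j, μ_k), where t(x,y) = −sin²γ / (sinh(x−y) sinh(x−y+iγ)) and V_j = ∏_{m=1}^{N} [sinh(λ_j − μ_m + iγ) sinh(λ_m − λ_j + iγ)] / [sinh(μ_m − λ_j +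 iγ) sinh(λ_j − λ_m + iγ)]. Then det M̃ = 0. -/
/-!
The vector `v_k = ∏_m sinh(μ_k - λ_m) / ∏_{m ≠ k} sinh(μ_k - μ_m)`, none of whose entries
vanishes, lies in the kernel of the matrix.

Up to exponential factors, `sinh (a - λ)` is the linear polynomial `x - e^{2λ}` in `x = e^{2a}`, so
a product of `N - 1` such factors is recovered by Lagrange interpolation from its values at the `N`
nodes `μ_k` (`prod_sinh_interpolate`). Interpolating `∏_{m ≠ j} sinh(· - λ_m)` at the point
`a = λ_j - c` gives in closed form (`sum_null_vector`)
`∑_k v_k / (sinh(μ_k - λ_j) sinh(μ_k - λ_j + c))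
  = (1 / sinh c) ∏_m sinh(λ_m - λ_j + c) / sinh(μ_m - λ_j + c)`.
For `c = iγ` this evaluates the first term of row `j` against `v`, for `c = -iγ` the second one, and
the factor `V_j` is exactly what makes the two cancel.
-/

open Complex Finset Matrix

lemma sinh_sub_eq_exp_s3 (x y : ℂ) :
    Complex.sinh (x - y) = Complex.exp (-x) * (Complex.exp (-y) / 2) *
      (Complex.exp (2 * x) - Complex.exp (2 * y)) := by
  have hx : Complex.exp (2 * x) = Complex.exp x * Complex.exp x := by
    rw [← Complex.exp_add]; ring_nf
  have hy : Complex.exp (2 * y) = Complex.exp y * Complex.exp y := by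
    rw [← Complex.exp_add]; ring_nf
  rw [Complex.sinh, neg_sub, Complex.exp_sub, Complex.exp_sub, hx, hy, Complex.exp_neg,
    Complex.exp_neg]
  have h1 := Complex.exp_ne_zero x
  have h2 := Complex.exp_ne_zero y
  field_simp

/-- Lagrange interpolation for products of `N - 1` hyperbolic sines at `N` nodes. -/
lemma prod_sinh_interpolate {N : ℕ} (lam mu : Fin N → ℂ) (j : Fin N)
    (hmu : ∀ k m : Fin N, k ≠ m → Complex.sinh (mu k - mu m) ≠ 0) (a : ℂ) :
    ∏ m ∈ univ.erase j, Complex.sinh (a - lam m) =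
      ∑ k, (∏ m ∈ univ.erase j, Complex.sinh (mu k - lam m)) *
        ∏ m ∈ univ.erase k, (Complex.sinh (a - mu m) / Complex.sinh (mu k - mu m)) := by
  classical
  set x : Fin N → ℂ := fun k => Complex.exp (2 * mu k) with hx
  set P : Polynomial ℂ :=
    ∏ m ∈ univ.erase j, (Polynomial.X - Polynomial.C (Complex.exp (2 * lam m))) with hP
  have hinj : Set.InjOn x (univ : Finset (Fin N)) := by
    intro k _ m _ h
    by_contra hkm
    apply hmu k m hkm
    rw [sinh_sub_eq_exp_s3]
    simp only [hx] at h
    rw [h]; ring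
  have hdeg : P.degree < (univ : Finset (Fin N)).card := by
    have hN : 0 < N := j.pos
    rw [hP, Polynomial.degree_prod]
    simp only [Polynomial.degree_X_sub_C, sum_const, card_erase_of_mem (mem_univ j), card_univ,
      Fintype.card_fin, nsmul_eq_mul, mul_one]
    exact_mod_cast Nat.sub_lt hN one_pos
  have hL := congrArg (Polynomial.eval (Complex.exp (2 * a)))
    (Lagrange.eq_interpolate hinj hdeg)
  have hPs : ∀ b : ℂ, ∏ m ∈ univ.erase j, Complex.sinh (b - lam m) =
      Complex.exp (-b) ^ (N - 1) * (∏ m ∈ univ.erase j, (Complex.exp (-lam m) / 2)) *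
        P.eval (Complex.exp (2 * b)) := by
    intro b
    simp only [sinh_sub_eq_exp_s3 b, prod_mul_distrib, hP, Polynomial.eval_prod, prod_const,
      card_erase_of_mem (mem_univ j), card_univ, Fintype.card_fin, Polynomial.eval_sub,
      Polynomial.eval_X, Polynomial.eval_C]
  have hB : ∀ k, ∏ m ∈ univ.erase k, (Complex.sinh (a - mu m) / Complex.sinh (mu k - mu m)) =
      (Complex.exp (-a) / Complex.exp (-mu k)) ^ (N - 1) *
        (Lagrange.basis univ x k).eval (Complex.exp (2 * a)) := by
    intro k
    have hc : (univ.erase k).card = N - 1 := by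
      rw [card_erase_of_mem (mem_univ k), card_univ, Fintype.card_fin]
    rw [Lagrange.basis, Polynomial.eval_prod, ← hc, ← prod_const, ← prod_mul_distrib]
    refine prod_congr rfl fun m hm => ?_
    have hne : Complex.exp (2 * mu k) - Complex.exp (2 * mu m) ≠ 0 := by
      intro h0
      apply hmu k m (ne_of_mem_erase hm).symm
      rw [sinh_sub_eq_exp_s3, h0, mul_zero]
    simp only [Lagrange.basisDivisor, Polynomial.eval_mul, Polynomial.eval_sub, Polynomial.eval_X,
      Polynomial.eval_C, hx, sinh_sub_eq_exp_s3]
    have h1 := Complex.exp_ne_zero (-mu k)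
    have h2 := Complex.exp_ne_zero (-mu m)
    field_simp
  rw [Lagrange.interpolate_apply, Polynomial.eval_finsetSum] at hL
  rw [hPs a, hL, mul_sum]
  refine sum_congr rfl fun k _ => ?_
  rw [hPs (mu k), hB k, div_pow, Polynomial.eval_mul, Polynomial.eval_C]
  have h1 := pow_ne_zero (N - 1) (Complex.exp_ne_zero (-mu k))
  field_simp
  simp only [hx]
  ring

/-- The candidate kernel vector `v_k = ∏_m sinh(μ_k - λ_m) / ∏_{m ≠ k} sinh(μ_k - μ_m)`. -/
noncomputable def nullVector {N : ℕ} (lam mu : Fin N → ℂ) (k : Fin N) : ℂ :=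
  (∏ m, Complex.sinh (mu k - lam m)) / ∏ m ∈ univ.erase k, Complex.sinh (mu k - mu m)

/-- The residue sum behind both terms of a row, obtained by interpolating at `λ_j - c`. -/
lemma sum_null_vector {N : ℕ} (lam mu : Fin N → ℂ) (j : Fin N) (c : ℂ)
    (hc : Complex.sinh c ≠ 0)
    (hmu : ∀ k m : Fin N, k ≠ m → Complex.sinh (mu k - mu m) ≠ 0)
    (hml : ∀ k : Fin N, Complex.sinh (mu k - lam j) ≠ 0)
    (hmlc : ∀ k : Fin N, Complex.sinh (mu k - lam j + c) ≠ 0) :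
    ∑ k, nullVector lam mu k /
        (Complex.sinh (mu k - lam j) * Complex.sinh (mu k - lam j + c)) =
      (∏ m, Complex.sinh (lam m - lam j + c) / Complex.sinh (mu m - lam j + c)) /
        Complex.sinh c := by
  have hI := prod_sinh_interpolate lam mu j hmu (lam j - c)
  have hneg : ∀ y : ℂ, Complex.sinh (lam j - c - y) = (-1) * Complex.sinh (y - lam j + c) := by
    intro y
    rw [show lam j - c - y = -(y - lam j + c) by ring, Complex.sinh_neg]; ring
  have hcard : ∀ k : Fin N, (univ.erase k).card = N - 1 := fun k => by
    rw [card_erase_of_mem (mem_univ k), card_univ, Fintype.card_fin]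
  simp only [hneg, prod_div_distrib, prod_mul_distrib, prod_const, hcard] at hI
  have hs : ((-1 : ℂ)) ^ (N - 1) ≠ 0 := pow_ne_zero _ (by norm_num)
  have hI' : ∏ m ∈ univ.erase j, Complex.sinh (lam m - lam j + c) =
      ∑ k, (∏ m ∈ univ.erase j, Complex.sinh (mu k - lam m)) *
        ((∏ m ∈ univ.erase k, Complex.sinh (mu m - lam j + c)) /
          ∏ m ∈ univ.erase k, Complex.sinh (mu k - mu m)) := by
    apply mul_left_cancel₀ hs
    rw [hI, mul_sum]
    exact sum_congr rfl fun k _ => by ring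
  have hQ : ∏ m, Complex.sinh (mu m - lam j + c) ≠ 0 := prod_ne_zero_iff.2 fun m _ => hmlc m
  rw [prod_div_distrib, ← mul_prod_erase univ _ (mem_univ j), hI', sub_self, zero_add,
    mul_div_assoc, mul_div_cancel_left₀ _ hc, sum_div]
  refine sum_congr rfl fun k _ => ?_
  have hD : ∏ m ∈ univ.erase k, Complex.sinh (mu k - mu m) ≠ 0 :=
    prod_ne_zero_iff.2 fun m hm => hmu k m (ne_of_mem_erase hm).symm
  have hE : ∏ m ∈ univ.erase k, Complex.sinh (mu m - lam j + c) ≠ 0 :=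
    prod_ne_zero_iff.2 fun m _ => hmlc m
  have h1 := hml k
  have h2 := hmlc k
  rw [nullVector, ← mul_prod_erase univ (fun m => Complex.sinh (mu k - lam m)) (mem_univ j),
    ← mul_prod_erase univ (fun m => Complex.sinh (mu m - lam j + c)) (mem_univ k)]
  field_simp

/-- Orthogonality of distinct Bethe eigenstates (trigonometric XXZ case): the
scalar-product matrix M̃ has vanishing determinant. -/
theorem det_eq_zero_trigonometric (N : ℕ) (hN : 1 ≤ N) (γ : ℂ)
    (hγ : Complex.sin γ ≠ 0)
    (lam mu : Fin N → ℂ)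
    (hmu : ∀ k m : Fin N, k ≠ m → Complex.sinh (mu k - mu m) ≠ 0)
    (hml : ∀ j k : Fin N, Complex.sinh (mu k - lam j) ≠ 0)
    (hmlc : ∀ j k : Fin N, Complex.sinh (mu k - lam j + I * γ) ≠ 0)
    (hlmc : ∀ j k : Fin N, Complex.sinh (lam j - mu k + I * γ) ≠ 0)
    (hllc : ∀ j m : Fin N, Complex.sinh (lam j - lam m + I * γ) ≠ 0) :
    Matrix.det (Matrix.of fun j k : Fin N =>
      tTrig γ (mu k) (lam j) +
        (∏ m : Fin N,
          (Complex.sinh (lam j - mu m + I * γ) * Complex.sinh (lam m - lam j + I * γ)) /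
            (Complex.sinh (mu m - lam j + I * γ) * Complex.sinh (lam j - lam m + I * γ))) *
          tTrig γ (lam j) (mu k)) = 0 := by
  have hc : Complex.sinh (I * γ) ≠ 0 := by
    rw [mul_comm, Complex.sinh_mul_I]
    exact mul_ne_zero hγ I_ne_zero
  refine Matrix.exists_mulVec_eq_zero_iff.1 ⟨nullVector lam mu, ?_, ?_⟩
  · intro h0
    refine div_ne_zero ?_ ?_ (congrFun h0 ⟨0, hN⟩)
    · exact prod_ne_zero_iff.2 fun m _ => hml m _
    · exact prod_ne_zero_iff.2 fun m hm => hmu _ m (ne_of_mem_erase hm).symm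
  funext j
  have hrev : ∀ y : ℂ, Complex.sinh (y - lam j + -(I * γ)) =
      (-1) * Complex.sinh (lam j - y + I * γ) := by
    intro y
    rw [show y - lam j + -(I * γ) = -(lam j - y + I * γ) by ring, Complex.sinh_neg]; ring
  have hrev0 : ∀ y : ℂ, Complex.sinh (y - lam j) = (-1) * Complex.sinh (lam j - y) := by
    intro y
    rw [← neg_sub, Complex.sinh_neg]; ring
  have hA := sum_null_vector lam mu j (I * γ) hc hmu (hml j) (hmlc j)
  -- `t(λ_j, μ_k)` is `t(μ_k, λ_j)` with `iγ` replaced by `-iγ`, since `sinh` is odd.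
  have hB := sum_null_vector lam mu j (-(I * γ)) (by rwa [Complex.sinh_neg, neg_ne_zero]) hmu
    (hml j) (fun k => by rw [hrev]; exact mul_ne_zero (by norm_num) (hlmc j k))
  simp only [hrev] at hB
  rw [Complex.sinh_neg] at hB
  have hsplit : ∀ V : ℂ, ∑ k, (tTrig γ (mu k) (lam j) + V * tTrig γ (lam j) (mu k)) *
      nullVector lam mu k = -(Complex.sin γ) ^ 2 *
        ((∑ k, nullVector lam mu k /
          (Complex.sinh (mu k - lam j) * Complex.sinh (mu k - lam j + I * γ))) +
        V * ∑ k, nullVector lam mu k /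
          (Complex.sinh (mu k - lam j) * ((-1) * Complex.sinh (lam j - mu k + I * γ)))) := by
    intro V
    rw [mul_sum, ← sum_add_distrib, mul_sum]
    refine sum_congr rfl fun k _ => ?_
    have e : Complex.sinh (mu k - lam j) * ((-1) * Complex.sinh (lam j - mu k + I * γ)) =
        Complex.sinh (lam j - mu k) * Complex.sinh (lam j - mu k + I * γ) := by
      rw [hrev0]; ring
    rw [e, tTrig, tTrig]
    ring
  simp only [Matrix.mulVec, dotProduct, Matrix.of_apply, Pi.zero_apply]
  rw [hsplit, hA, hB]
  simp only [prod_div_distrib, prod_mul_distrib, prod_const]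
  have n1 : ∏ m, Complex.sinh (lam j - mu m + I * γ) ≠ 0 :=
    prod_ne_zero_iff.2 fun m _ => hlmc j m
  have n2 : ∏ m, Complex.sinh (mu m - lam j + I * γ) ≠ 0 :=
    prod_ne_zero_iff.2 fun m _ => hmlc j m
  have n3 : ∏ m, Complex.sinh (lam j - lam m + I * γ) ≠ 0 :=
    prod_ne_zero_iff.2 fun m _ => hllc j m
  have n4 : ((-1 : ℂ)) ^ (univ : Finset (Fin N)).card ≠ 0 := pow_ne_zero _ (by norm_num)
  field_simp
  ring
end

section
/- Let N ≥ 1, let s be a nonzero complex number, let μ_1,…,μ_N be pairwise distinct complex numbers, let λ_1,…,λ_N be complex numbers, and fix an index j ∈ {1,…,N}. Assume μ_k ≠ λ_j and μ_k − λ_j + s ≠ 0 for all k. Then ∑_{k=1}^{N} [1/((μ_k − λ_j)(μ_k − λ_j + s))] · (∏_{m=1}^{N} (μ_k − λ_m)) / (∏_{m=1, m≠k}^{N} (μ_k − μ_m)) = (1/s) · ∏_{m=1}^{N} (λ_m − λ_j + s)/(μ_m − λ_j + s). -/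
open Complex Finset

/-!
The factor `μ_k - λ_j` cancels from each summand, leaving `P(μ_k)` with
`P = ∏_{m ≠ j} (X - λ_m)`. Since `deg P = N - 1 < N`, `P` equals its Lagrange interpolant at the
nodes `μ_k`, and evaluating the barycentric form of the interpolant
(`Lagrange.eval_interpolate_not_at_node`) at `w = λ_j - s`, which is not a node, expresses the sum
as `-P(w) / ∏_m (w - μ_m)`. Restoring the factor `w - λ_j = -s` gives the right-hand side.
-/

/-- The partial-fraction summation identity of Appendix 1, obtained from the residues of
`I = (1/2πi)∮ dz [(z-λ_j)(z-λ_j+s)]⁻¹ ∏_m (z-λ_m)/(z-μ_m)` around infinity. -/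
theorem residue_sum_identity (N : ℕ) (hN : 1 ≤ N) (s : ℂ) (hs : s ≠ 0)
    (mu lam : Fin N → ℂ)
    (hmu : ∀ k m : Fin N, k ≠ m → mu k ≠ mu m)
    (j : Fin N)
    (h1 : ∀ k : Fin N, mu k ≠ lam j)
    (h2 : ∀ k : Fin N, mu k - lam j + s ≠ 0) :
    ∑ k : Fin N,
      (1 / ((mu k - lam j) * (mu k - lam j + s))) *
        ((∏ m : Fin N, (mu k - lam m)) / ∏ m ∈ univ.erase k, (mu k - mu m)) =
      (1 / s) * ∏ m : Fin N, (lam m - lam j + s) / (mu m - lam j + s) := by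
  set w : ℂ := lam j - s with hw
  have hinj : Set.InjOn mu (univ : Finset (Fin N)) := fun a _ b _ hab => by
    by_contra hne
    exact hmu a b hne hab
  have hwmu : ∀ k : Fin N, w - mu k ≠ 0 := fun k h => h2 k (by linear_combination -h)
  let P : Polynomial ℂ := Lagrange.nodal (univ.erase j) lam
  have hdeg : P.degree < #(univ : Finset (Fin N)) := by
    rw [Lagrange.degree_nodal]
    exact_mod_cast card_erase_lt_of_mem (mem_univ j)
  have hP : ∀ x, P.eval x = ∏ m ∈ univ.erase j, (x - lam m) := fun x => Lagrange.eval_nodal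
  have hint := Lagrange.eval_interpolate_not_at_node (s := univ) (v := mu) (x := w)
    (fun i => P.eval (mu i)) (fun i _ => sub_ne_zero.mp (hwmu i))
  rw [← Lagrange.eq_interpolate hinj hdeg, Lagrange.eval_nodal (s := univ) (v := mu)] at hint
  have hD : ∏ m, (w - mu m) ≠ 0 := prod_ne_zero_iff.mpr fun m _ => hwmu m
  have hL : ∑ k : Fin N, (1 / ((mu k - lam j) * (mu k - lam j + s))) *
      ((∏ m : Fin N, (mu k - lam m)) / ∏ m ∈ univ.erase k, (mu k - mu m)) =
      -∑ k, Lagrange.nodalWeight univ mu k * (w - mu k)⁻¹ * P.eval (mu k) := by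
    rw [← sum_neg_distrib]
    refine sum_congr rfl fun k _ => ?_
    have ha : mu k - lam j ≠ 0 := sub_ne_zero.mpr (h1 k)
    rw [hP, Lagrange.nodalWeight, prod_inv_distrib, ← mul_prod_erase univ _ (mem_univ j),
      show mu k - lam j + s = -(w - mu k) by rw [hw]; ring]
    have hb := hwmu k
    have hc : ∏ m ∈ univ.erase k, (mu k - mu m) ≠ 0 :=
      prod_ne_zero_iff.mpr fun m hm => sub_ne_zero.mpr (hmu k m (ne_of_mem_erase hm).symm)
    field_simp
  have hR : ∏ m : Fin N, (lam m - lam j + s) / (mu m - lam j + s) =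
      -s * P.eval w / ∏ m, (w - mu m) := by
    have hflip : ∀ m, (lam m - lam j + s) / (mu m - lam j + s) = (w - lam m) / (w - mu m) :=
      fun m => by
        rw [← neg_div_neg_eq]
        congr 1 <;> rw [hw] <;> ring
    rw [prod_congr rfl fun m _ => hflip m, prod_div_distrib, hP,
      ← mul_prod_erase univ (fun m => w - lam m) (mem_univ j),
      show w - lam j = -s by rw [hw]; ring]
  rw [hL, hR, hint]
  field_simp
end

section
/- (Theorem 1.) Let N ≥ 1, let c be a nonzero complex number, and let κ be a complex number (κ = e^α). Let λ_1,…,λ_N be pairwise distinct complex numbers and μ_1,…,μ_N be pairwise distinct complex numbers with μ_a ≠ λ_b, μ_a − λ_b + ic ≠ 0 and λ_a − μ_b + ic ≠ 0 for all a,b, and λ_a − λ_b + ic ≠ 0 for all a,b. For n ≥ 0 and complex numbers x_1,…,x_n, let σ_j^{(n)}(x_1,…,x_n) denote the coefficient of X^j in ∏_{m=1}^{n}(X + x_m). Define the 2N×2N matrix Ω with rows indexed by j = 0,1,…,2N−1 and columns as follows: for k = 1,…,N, Ω_{j,k} = σ_j^{(2N−1)}({μ_a − ic/2}_{a≠k},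 {λ_a + ic/2}_{a=1}^{N}) − κ · σ_j^{(2N−1)}({μ_a + ic/2}_{a≠k}, {λ_a − ic/2}_{a=1}^{N}), and for k = 1,…,N, Ω_{j,N+k} = σ_j^{(2N−1)}({μ_a + ic/2}_{a=1}^{N}, {λ_a − ic/2}_{a≠k}) − σ_j^{(2N−1)}({μ_a − ic/2}_{a=1}^{N}, {λ_a + ic/2}_{a≠k}). Then det Ω = Δ(μ) · Δ(λ) · (∏_{a,b=1}^{N} (μ_a − λ_b)) · (∏_{a>b} g(λ_a,λ_b) g(μ_b,μ_a)) · (∏_{a,b=1}^{N} h(λ_a,μ_b)) · det_{1≤j,k≤N} ( κ · V_j · t(μ_k,λ_j) + t(λ_j,μ_k) ), where Δ(x) = ∏_{a>b}(x_a − x_b) and V_j = ∏_{m=1}^{N} [h(μ_m,λ_j) h(λ_j,λ_m)] / [h(λ_j,μ_m) h(λ_m,λ_j)]. -/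
/-!
Write `e = ic`. The columns of `Ω` are coefficient vectors of polynomials of degree `< 2N`, so
multiplying `Ω` on the left by the Vandermonde matrix of the `2N` points `-λ_j ± e/2` evaluates
these polynomials there (`det_eval_eq`). At each of these points one of the products over `λ`
vanishes, and after scaling the rows the evaluated matrix is (`evalMat_eq`)

  `[ C, -P ; -κ C, Q ]`,

where `C = 1/(μ_k - λ_j)` is a Cauchy matrix and `P`, `Q` are the matrices `1/(λ_k - λ_j ± e)`
with a diagonal correction (`shiftMat`). One block row operation gives the determinant
`det C · det (Q - κ P)`.

Let `ψ(x) = ∏ (μ_a - x) / ∏ (λ_a - x)` and let `w_l` be the weights in its partial fraction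
expansion `ψ(x) = 1 + ∑ w_l / (λ_l - x)`. Since `ψ(μ_k) = 0`, this expansion computes
`(Q - κ P) · diag(w) · C` in closed form (`shiftMat_mul`): up to the row factors `ψ(λ_j + e)/e` it
is the matrix `κ V_j t(μ_k, λ_j) + t(λ_j, μ_k)`, with `V_j = ψ(λ_j - e)/ψ(λ_j + e)`
(`det_shiftMat_mul`). Hence `det C · det (Q - κ P)` is this determinant times explicit products,
and no evaluation of the Cauchy determinant itself is needed. The remaining products cancel
against the Vandermonde determinant (`det_omegaMat`).
-/


open Complex Finset Matrix

/-- `g(x,y) = ic/(x-y)` from the rational R-matrix. -/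
noncomputable def gRat (c x y : ℂ) : ℂ := I * c / (x - y)

/-- `h(x,y) = (x-y+ic)/(ic)` from the rational R-matrix. -/
noncomputable def hRat (c x y : ℂ) : ℂ := (x - y + I * c) / (I * c)

/-! ### Partial fractions and products of Cauchy matrices -/

/-- The residue weight `∏_a (μ_a - λ_l) / ∏_{a ≠ l} (λ_a - λ_l)`. -/
noncomputable def resWeight {N : ℕ} (lam mu : Fin N → ℂ) (l : Fin N) : ℂ :=
  (∏ a, (mu a - lam l)) / ∏ a ∈ univ.erase l, (lam a - lam l)

/-- The ratio `ψ(x) = ∏_a (μ_a - x) / ∏_a (λ_a - x)`. -/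
noncomputable def ratioFn {N : ℕ} (lam mu : Fin N → ℂ) (x : ℂ) : ℂ :=
  (∏ a, (mu a - x)) / ∏ a, (lam a - x)

/-- Partial fractions of `ψ`, by Lagrange interpolation at the nodes `-λ_l`. -/
lemma sum_resWeight {N : ℕ} {lam mu : Fin N → ℂ} (hlam : Function.Injective lam)
    {x : ℂ} (hx : ∀ a, lam a ≠ x) :
    ∑ l, resWeight lam mu l / (lam l - x) = ratioFn lam mu x - 1 := by
  set v : Fin N → ℂ := fun a => -lam a with hv
  set p : Fin N → ℂ := fun a => -mu a with hp
  have hinj : Set.InjOn v (univ : Finset (Fin N)) := by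
    intro a _ b _ h
    exact hlam (neg_injective h)
  have hdeg : (Lagrange.nodal univ p - Lagrange.nodal univ v).degree
      < ((univ : Finset (Fin N)).card : WithBot ℕ) := by
    rw [← Lagrange.degree_nodal (R := ℂ) (s := univ) (v := p)]
    apply Polynomial.degree_sub_lt_left
    · rw [Lagrange.degree_nodal, Lagrange.degree_nodal]
    · exact Lagrange.nodal_monic.ne_zero
    · rw [Lagrange.nodal_monic.leadingCoeff, Lagrange.nodal_monic.leadingCoeff]
  have key := Lagrange.eq_interpolate_of_eval_eq (fun l => ∏ a, (mu a - lam l)) hinj hdeg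
    (by
      intro i hi
      rw [Polynomial.eval_sub, Lagrange.eval_nodal_at_node hi, sub_zero, Lagrange.eval_nodal]
      exact prod_congr rfl fun a _ => by simp only [hv, hp]; ring)
  have h2 := congrArg (Polynomial.eval (-x)) key
  rw [Lagrange.eval_interpolate_not_at_node _
    (fun i _ h => hx i (neg_injective h.symm)), Polynomial.eval_sub, Lagrange.eval_nodal,
    Lagrange.eval_nodal] at h2
  have e1 : ∏ i, (-x - p i) = ∏ a, (mu a - x) :=
    prod_congr rfl fun a _ => by simp only [hp]; ring
  have e2 : ∏ i, (-x - v i) = ∏ a, (lam a - x) :=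
    prod_congr rfl fun a _ => by simp only [hv]; ring
  rw [e1, e2] at h2
  have hne : ∏ a, (lam a - x) ≠ 0 := prod_ne_zero_iff.2 fun a _ => sub_ne_zero.2 (hx a)
  have e3 : ∑ l, resWeight lam mu l / (lam l - x) =
      ∑ i, Lagrange.nodalWeight univ v i * (-x - v i)⁻¹ * ∏ a, (mu a - lam i) := by
    refine sum_congr rfl fun i _ => ?_
    have e4 : Lagrange.nodalWeight univ v i = (∏ a ∈ univ.erase i, (lam a - lam i))⁻¹ := by
      rw [Lagrange.nodalWeight, prod_inv_distrib]
      congr 1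
      exact prod_congr rfl fun a _ => by simp only [hv]; ring
    have e5 : -x - v i = lam i - x := by simp only [hv]; ring
    rw [e4, e5, resWeight]
    ring
  rw [e3, ratioFn, eq_sub_iff_add_eq, eq_div_iff hne]
  linear_combination -h2

/-- The sum over `l` in the product of two Cauchy matrices, evaluated through the partial fractions
of `ψ` at `x` and at its zero `μ_k`. -/
lemma sum_resWeight_shift {N : ℕ} {lam mu : Fin N → ℂ} (hlam : Function.Injective lam)
    (h1 : ∀ a b, mu a ≠ lam b) {x : ℂ} (hx : ∀ a, lam a ≠ x) {k : Fin N} (hk : mu k ≠ x) :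
    ∑ l, 1 / (lam l - x) * resWeight lam mu l * (1 / (mu k - lam l)) =
      ratioFn lam mu x / (mu k - x) := by
  have a1 := sum_resWeight (mu := mu) hlam hx
  have a2 := sum_resWeight (mu := mu) hlam (x := mu k) fun a => (h1 k a).symm
  have a3 : ratioFn lam mu (mu k) = 0 := by
    rw [ratioFn, prod_eq_zero (mem_univ k) (sub_self _), zero_div]
  have hk' : mu k - x ≠ 0 := sub_ne_zero.2 hk
  calc _ = ∑ l, (resWeight lam mu l / (lam l - x) - resWeight lam mu l / (lam l - mu k))
        / (mu k - x) := by
        refine sum_congr rfl fun l _ => ?_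
        have b1 : lam l - x ≠ 0 := sub_ne_zero.2 (hx l)
        have b2 : mu k - lam l ≠ 0 := sub_ne_zero.2 (h1 k l)
        have b3 : lam l - mu k ≠ 0 := sub_ne_zero.2 (h1 k l).symm
        field_simp
        ring
    _ = _ := by
        rw [← sum_div, sum_sub_distrib, a1, a2, a3]
        ring

/-- The shifted Cauchy matrix `1/(λ_l - λ_j - s)`, with `ψ(λ_j + s)/w_j` subtracted on the
diagonal, where `w_j` is `resWeight`. For `s = ∓e` these are the matrices `P` and `Q`. -/
noncomputable def shiftMat {N : ℕ} (lam mu : Fin N → ℂ) (s : ℂ) : Matrix (Fin N) (Fin N) ℂ :=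
  Matrix.of fun j l => 1 / (lam l - (lam j + s)) -
    if j = l then ratioFn lam mu (lam j + s) / resWeight lam mu j else 0

/-- The Cauchy matrix `1/(μ_k - λ_j)`. -/
noncomputable def cauchyMat {N : ℕ} (lam mu : Fin N → ℂ) : Matrix (Fin N) (Fin N) ℂ :=
  Matrix.of fun j k => 1 / (mu k - lam j)

lemma resWeight_ne_zero {N : ℕ} {lam mu : Fin N → ℂ} (hlam : Function.Injective lam)
    (h1 : ∀ a b, mu a ≠ lam b) (l : Fin N) : resWeight lam mu l ≠ 0 :=
  div_ne_zero (prod_ne_zero_iff.2 fun a _ => sub_ne_zero.2 (h1 a l))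
    (prod_ne_zero_iff.2 fun _ ha => sub_ne_zero.2 (hlam.ne (ne_of_mem_erase ha)))

/-- Multiplying by the weighted Cauchy matrix turns the corrected shifted Cauchy matrix in `λ`
into a row-scaled difference of Cauchy matrices. -/
lemma shiftMat_mul {N : ℕ} {lam mu : Fin N → ℂ} (hlam : Function.Injective lam)
    (h1 : ∀ a b, mu a ≠ lam b) {s : ℂ} (hs : ∀ a b, lam a ≠ lam b + s)
    (hs' : ∀ a b, mu a ≠ lam b + s) (j k : Fin N) :
    (shiftMat lam mu s * (Matrix.diagonal (resWeight lam mu) * cauchyMat lam mu)) j k =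
      ratioFn lam mu (lam j + s) * (1 / (mu k - (lam j + s)) - 1 / (mu k - lam j)) := by
  have h := sum_resWeight_shift hlam h1 (fun a => hs a j) (hs' k j)
  rw [Matrix.mul_apply]
  simp only [Matrix.diagonal_mul, shiftMat, cauchyMat, Matrix.of_apply, sub_mul,
    sum_sub_distrib, ite_mul, zero_mul, sum_ite_eq, mem_univ, if_true]
  simp only [← mul_assoc]
  rw [h, div_mul_cancel₀ _ (resWeight_ne_zero hlam h1 j)]
  ring

/-! ### Block and Vandermonde determinants, products over pairs -/

/-- Subtracting the matching multiple of the first block row clears the lower left block. -/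
lemma det_block {N : ℕ} (C P Q : Matrix (Fin N) (Fin N) ℂ) (κ : ℂ) :
    (Matrix.fromBlocks C (-P) (-(κ • C)) Q).det = C.det * (Q - κ • P).det := by
  have h : Matrix.fromBlocks C (-P) (-(κ • C)) Q =
      Matrix.fromBlocks 1 0 (-(κ • (1 : Matrix (Fin N) (Fin N) ℂ))) 1 *
        Matrix.fromBlocks C (-P) 0 (Q - κ • P) := by
    rw [Matrix.fromBlocks_multiply]
    congr 1 <;> simp
  rw [h, Matrix.det_mul, Matrix.det_fromBlocks_zero₁₂, Matrix.det_fromBlocks_zero₂₁]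
  simp

/-- The evaluation matrix of polynomials of degree `< n` is the Vandermonde matrix times the
coefficient matrix. -/
lemma det_eval_eq {n : ℕ} (x : Fin n → ℂ) (p : Fin n → Polynomial ℂ)
    (hp : ∀ k, (p k).natDegree < n) :
    (Matrix.of fun i k => (p k).eval (x i)).det =
      (Matrix.vandermonde x).det * (Matrix.of fun j k : Fin n => (p k).coeff (j : ℕ)).det := by
  rw [← Matrix.det_mul]
  congr 1
  ext i k
  simp only [Matrix.mul_apply, Matrix.of_apply, Matrix.vandermonde_apply]
  rw [Polynomial.eval_eq_sum_range' (hp k), ← Fin.sum_univ_eq_sum_range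
    (fun j => (p k).coeff j * x i ^ j)]
  exact sum_congr rfl fun _ _ => mul_comm _ _

/-- The index equivalence matching the two column blocks: `inl k ↦ k`, `inr k ↦ N + k`. -/
def blockEquiv (N : ℕ) : Fin N ⊕ Fin N ≃ Fin (2 * N) :=
  finSumFinEquiv.trans (finCongr (two_mul N).symm)

lemma blockEquiv_inl_val {N : ℕ} (k : Fin N) : (blockEquiv N (Sum.inl k) : ℕ) = k := by
  simp [blockEquiv]

lemma blockEquiv_inr_val {N : ℕ} (k : Fin N) : (blockEquiv N (Sum.inr k) : ℕ) = N + k := by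
  simp [blockEquiv, add_comm]

lemma det_vandermonde_eq_ite {n : ℕ} (x : Fin n → ℂ) :
    (Matrix.vandermonde x).det = ∏ i, ∏ j, if i < j then x j - x i else 1 := by
  rw [Matrix.det_vandermonde]
  refine prod_congr rfl fun i _ => ?_
  rw [← prod_filter]
  congr 1
  ext j
  simp

/-- The Vandermonde determinant of two concatenated lists of nodes. -/
lemma det_vandermonde_sum {N : ℕ} (y z : Fin N → ℂ) :
    (Matrix.vandermonde (Sum.elim y z ∘ (blockEquiv N).symm)).det =
      (Matrix.vandermonde y).det * (Matrix.vandermonde z).det * ∏ i, ∏ j, (z j - y i) := by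
  simp only [det_vandermonde_eq_ite]
  rw [← (blockEquiv N).prod_comp]
  simp_rw [← (blockEquiv N).prod_comp]
  simp only [Fintype.prod_sum_type, Function.comp, Equiv.symm_apply_apply, Sum.elim_inl,
    Sum.elim_inr, Fin.lt_def, blockEquiv_inl_val, blockEquiv_inr_val]
  have c1 : ∀ i j : Fin N, (i : ℕ) < N + j := fun i j => by omega
  have c2 : ∀ i j : Fin N, ¬ (N + (i : ℕ) < j) := fun i j => by omega
  simp only [c1, c2, if_true, if_false, prod_const_one, one_mul, add_lt_add_iff_left,
    prod_mul_distrib]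
  ring

/-- A product over the off-diagonal ordered pairs, split into the pairs on either side of the
diagonal. -/
lemma prod_offdiag {N : ℕ} (f : Fin N → Fin N → ℂ) :
    ∏ a, ∏ b ∈ univ.erase a, f b a =
      (∏ a, ∏ b ∈ univ.filter (· < a), f a b) * ∏ a, ∏ b ∈ univ.filter (· < a), f b a := by
  have h := Finset.prod_prod_Ioi_mul_eq_prod_prod_off_diag f
  have h' : ∀ g : Fin N → Fin N → ℂ, ∏ a, ∏ b ∈ univ.filter (· < a), g a b =
      ∏ b, ∏ a ∈ Ioi b, g a b := by
    intro g
    refine prod_comm' ?_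
    simp
  rw [h' f, h' fun a b => f b a, ← prod_mul_distrib]
  simp only [← prod_mul_distrib]
  rw [h]
  refine prod_congr rfl fun a _ => prod_congr ?_ fun _ _ => rfl
  ext b
  simp

lemma vandermonde_det_eq {N : ℕ} (lam : Fin N → ℂ) (s : ℂ) :
    (Matrix.vandermonde fun a => -lam a + s).det =
      ∏ a, ∏ b ∈ univ.filter (· < a), (lam b - lam a) := by
  rw [Matrix.det_vandermonde]
  have h : ∏ a, ∏ b ∈ univ.filter (· < a), (lam b - lam a) = ∏ b, ∏ a ∈ Ioi b, (lam b - lam a) :=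
    prod_comm' (by simp)
  rw [h]
  exact prod_congr rfl fun _ _ => prod_congr rfl fun _ _ => by ring

/-! ### Evaluating the columns of `Ω` -/

/-- The polynomial whose coefficients form the `k`-th column of the first block. -/
noncomputable def polyA {N : ℕ} (e κ : ℂ) (lam mu : Fin N → ℂ) (k : Fin N) : Polynomial ℂ :=
  (∏ a ∈ univ.erase k, (Polynomial.X + Polynomial.C (mu a - e / 2))) *
      ∏ a : Fin N, (Polynomial.X + Polynomial.C (lam a + e / 2)) -
    Polynomial.C κ * ((∏ a ∈ univ.erase k, (Polynomial.X + Polynomial.C (mu a + e / 2))) *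
      ∏ a : Fin N, (Polynomial.X + Polynomial.C (lam a - e / 2)))

/-- The polynomial whose coefficients form the `k`-th column of the second block. -/
noncomputable def polyB {N : ℕ} (e : ℂ) (lam mu : Fin N → ℂ) (k : Fin N) : Polynomial ℂ :=
  (∏ a : Fin N, (Polynomial.X + Polynomial.C (mu a + e / 2))) *
      ∏ a ∈ univ.erase k, (Polynomial.X + Polynomial.C (lam a - e / 2)) -
    (∏ a : Fin N, (Polynomial.X + Polynomial.C (mu a - e / 2))) *
      ∏ a ∈ univ.erase k, (Polynomial.X + Polynomial.C (lam a + e / 2))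

lemma natDegree_prod_X_add_C {N : ℕ} (s : Finset (Fin N)) (f : Fin N → ℂ) :
    (∏ a ∈ s, (Polynomial.X + Polynomial.C (f a))).natDegree = s.card := by
  rw [Polynomial.natDegree_prod_of_monic _ _ fun a _ => Polynomial.monic_X_add_C (f a)]
  simp

lemma natDegree_mul_prod_lt {N : ℕ} (k : Fin N) (f g : Fin N → ℂ) :
    ((∏ a ∈ univ.erase k, (Polynomial.X + Polynomial.C (f a))) *
      ∏ a : Fin N, (Polynomial.X + Polynomial.C (g a))).natDegree < 2 * N := by
  refine lt_of_le_of_lt Polynomial.natDegree_mul_le ?_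
  rw [natDegree_prod_X_add_C, natDegree_prod_X_add_C, card_erase_of_mem (mem_univ k), card_univ,
    Fintype.card_fin]
  have := k.isLt
  omega

lemma natDegree_polyA_lt {N : ℕ} (e κ : ℂ) (lam mu : Fin N → ℂ) (k : Fin N) :
    (polyA e κ lam mu k).natDegree < 2 * N :=
  lt_of_le_of_lt (Polynomial.natDegree_sub_le _ _) <|
    max_lt (natDegree_mul_prod_lt k (fun a => mu a - e / 2) fun a => lam a + e / 2) <|
      lt_of_le_of_lt (Polynomial.natDegree_C_mul_le _ _)
        (natDegree_mul_prod_lt k (fun a => mu a + e / 2) fun a => lam a - e / 2)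

lemma natDegree_polyB_lt {N : ℕ} (e : ℂ) (lam mu : Fin N → ℂ) (k : Fin N) :
    (polyB e lam mu k).natDegree < 2 * N := by
  refine lt_of_le_of_lt (Polynomial.natDegree_sub_le _ _) ?_
  rw [mul_comm, mul_comm (∏ a : Fin N, (Polynomial.X + Polynomial.C (mu a - e / 2)))]
  exact max_lt (natDegree_mul_prod_lt k (fun a => lam a - e / 2) fun a => mu a + e / 2)
    (natDegree_mul_prod_lt k (fun a => lam a + e / 2) fun a => mu a - e / 2)

lemma eval_prod_X_add_C {N : ℕ} (s : Finset (Fin N)) (f g : Fin N → ℂ) (x : ℂ)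
    (h : ∀ a, x + f a = g a) :
    (∏ a ∈ s, (Polynomial.X + Polynomial.C (f a))).eval x = ∏ a ∈ s, g a := by
  rw [Polynomial.eval_prod]
  exact prod_congr rfl fun a _ => by simp [h]

lemma prod_erase_eq_div {N : ℕ} (f : Fin N → ℂ) (k : Fin N) (h : f k ≠ 0) :
    ∏ a ∈ univ.erase k, f a = (∏ a, f a) * (1 / f k) := by
  rw [← mul_prod_erase univ f (mem_univ k)]
  field_simp

lemma prod_erase_sub_self {N : ℕ} (lam : Fin N → ℂ) (j k : Fin N) :
    ∏ a ∈ univ.erase k, (lam a - lam j) =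
      if j = k then ∏ a ∈ univ.erase j, (lam a - lam j) else 0 := by
  split_ifs with h
  · rw [h]
  · exact prod_eq_zero (mem_erase.2 ⟨h, mem_univ j⟩) (sub_self _)

/-- Row-scaled entries of the corrected shifted Cauchy matrix, as differences of products. -/
lemma mul_shiftMat {N : ℕ} {lam mu : Fin N → ℂ} (hlam : Function.Injective lam)
    (h1 : ∀ a b, mu a ≠ lam b) {s : ℂ} (hs : ∀ a b, lam a ≠ lam b + s) (j k : Fin N) :
    (∏ a, (mu a - lam j)) * (∏ a, (lam a - (lam j + s))) * shiftMat lam mu s j k =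
      (∏ a, (mu a - lam j)) * (∏ a ∈ univ.erase k, (lam a - (lam j + s))) -
        (∏ a, (mu a - (lam j + s))) * ∏ a ∈ univ.erase k, (lam a - lam j) := by
  have hm : ∏ a, (mu a - lam j) ≠ 0 := prod_ne_zero_iff.2 fun a _ => sub_ne_zero.2 (h1 a j)
  have hl : ∏ a, (lam a - (lam j + s)) ≠ 0 :=
    prod_ne_zero_iff.2 fun a _ => sub_ne_zero.2 (hs a j)
  have hr : ∏ a ∈ univ.erase j, (lam a - lam j) ≠ 0 :=
    prod_ne_zero_iff.2 fun _ ha => sub_ne_zero.2 (hlam.ne (ne_of_mem_erase ha))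
  rw [prod_erase_sub_self, prod_erase_eq_div (fun a => lam a - (lam j + s)) k
    (sub_ne_zero.2 (hs k j))]
  simp only [shiftMat, Matrix.of_apply, resWeight, ratioFn]
  split_ifs with h
  · field_simp
  · ring

/-- Evaluating the columns of `Ω` at the points `-λ_j + e/2` and `-λ_j - e/2`. -/
lemma evalMat_eq {N : ℕ} {lam mu : Fin N → ℂ} (hlam : Function.Injective lam)
    (h1 : ∀ a b, mu a ≠ lam b) {e : ℂ} (κ : ℂ) (hs : ∀ a b, lam a ≠ lam b + e)
    (hs' : ∀ a b, lam a ≠ lam b + -e) :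
    (Matrix.of fun i k : Fin N ⊕ Fin N =>
      (Sum.elim (polyA e κ lam mu) (polyB e lam mu) k).eval
        (Sum.elim (fun j => -lam j + e / 2) (fun j => -lam j + -(e / 2)) i)) =
    Matrix.diagonal (Sum.elim
      (fun j => (∏ a, (mu a - lam j)) * ∏ a, (lam a - (lam j + -e)))
      (fun j => (∏ a, (mu a - lam j)) * ∏ a, (lam a - (lam j + e)))) *
      Matrix.fromBlocks (cauchyMat lam mu) (-shiftMat lam mu (-e)) (-(κ • cauchyMat lam mu))
        (shiftMat lam mu e) := by
  ext i k
  rw [Matrix.diagonal_mul, Matrix.of_apply]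
  -- the values of the four kinds of linear factors at the two kinds of nodes
  have y1 : ∀ (s : Finset (Fin N)) (f : Fin N → ℂ) (j : Fin N),
      (∏ a ∈ s, (Polynomial.X + Polynomial.C (f a - e / 2))).eval (-lam j + e / 2) =
        ∏ a ∈ s, (f a - lam j) := fun s f j => eval_prod_X_add_C _ _ _ _ fun a => by ring
  have y2 : ∀ (s : Finset (Fin N)) (f : Fin N → ℂ) (j : Fin N),
      (∏ a ∈ s, (Polynomial.X + Polynomial.C (f a + e / 2))).eval (-lam j + e / 2) =
        ∏ a ∈ s, (f a - (lam j + -e)) := fun s f j => eval_prod_X_add_C _ _ _ _ fun a => by ring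
  have z1 : ∀ (s : Finset (Fin N)) (f : Fin N → ℂ) (j : Fin N),
      (∏ a ∈ s, (Polynomial.X + Polynomial.C (f a - e / 2))).eval (-lam j + -(e / 2)) =
        ∏ a ∈ s, (f a - (lam j + e)) := fun s f j => eval_prod_X_add_C _ _ _ _ fun a => by ring
  have z2 : ∀ (s : Finset (Fin N)) (f : Fin N → ℂ) (j : Fin N),
      (∏ a ∈ s, (Polynomial.X + Polynomial.C (f a + e / 2))).eval (-lam j + -(e / 2)) =
        ∏ a ∈ s, (f a - lam j) := fun s f j => eval_prod_X_add_C _ _ _ _ fun a => by ring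
  have hz : ∀ j : Fin N, ∏ a, (lam a - lam j) = 0 := fun j =>
    prod_eq_zero (mem_univ j) (sub_self _)
  have hd : ∀ j k : Fin N, ∏ a ∈ univ.erase k, (mu a - lam j) =
      (∏ a, (mu a - lam j)) * (1 / (mu k - lam j)) := fun j k =>
    prod_erase_eq_div (fun a => mu a - lam j) k (sub_ne_zero.2 (h1 k j))
  rcases i with j | j <;> rcases k with k | k
  · simp only [Sum.elim_inl, polyA, Polynomial.eval_sub, Polynomial.eval_mul, Polynomial.eval_C,
      y1, y2, hz, hd, Matrix.fromBlocks_apply₁₁, cauchyMat, Matrix.of_apply]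
    ring
  · simp only [Sum.elim_inl, Sum.elim_inr, polyB, Polynomial.eval_sub, Polynomial.eval_mul,
      y1, y2, Matrix.fromBlocks_apply₁₂, Matrix.neg_apply]
    rw [mul_neg, mul_shiftMat hlam h1 hs']
    ring
  · simp only [Sum.elim_inl, Sum.elim_inr, polyA, Polynomial.eval_sub, Polynomial.eval_mul,
      Polynomial.eval_C, z1, z2, hz, hd, Matrix.fromBlocks_apply₂₁, Matrix.neg_apply,
      Matrix.smul_apply, smul_eq_mul, cauchyMat, Matrix.of_apply]
    ring
  · simp only [Sum.elim_inr, polyB, Polynomial.eval_sub, Polynomial.eval_mul,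
      z1, z2, Matrix.fromBlocks_apply₂₂]
    rw [mul_shiftMat hlam h1 hs]

/-- The matrix `Ω` as the matrix of coefficients of its column polynomials. -/
noncomputable def omegaMat {N : ℕ} (e κ : ℂ) (lam mu : Fin N → ℂ) :
    Matrix (Fin (2 * N)) (Fin (2 * N)) ℂ :=
  Matrix.of fun j k =>
    (Sum.elim (polyA e κ lam mu) (polyB e lam mu) ((blockEquiv N).symm k)).coeff (j : ℕ)

/-- The determinant of the evaluated matrix, computed in two ways: with the Vandermonde factor, and
from its block form. -/
lemma vandermonde_mul_det_omegaMat {N : ℕ} {lam mu : Fin N → ℂ} (hlam : Function.Injective lam)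
    (h1 : ∀ a b, mu a ≠ lam b) {e : ℂ} (κ : ℂ) (hs : ∀ a b, lam a ≠ lam b + e)
    (hs' : ∀ a b, lam a ≠ lam b + -e) :
    (∏ a, ∏ b ∈ univ.filter (· < a), (lam b - lam a)) *
      (∏ a, ∏ b ∈ univ.filter (· < a), (lam b - lam a)) *
      (∏ j, ∏ a, (lam a - (lam j + e))) * (omegaMat e κ lam mu).det =
    (∏ j, ∏ a, (mu a - lam j)) * (∏ j, ∏ a, (lam a - (lam j + -e))) *
      ((∏ j, ∏ a, (mu a - lam j)) * (∏ j, ∏ a, (lam a - (lam j + e)))) *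
      ((cauchyMat lam mu).det * (shiftMat lam mu e - κ • shiftMat lam mu (-e)).det) := by
  have hE := congrArg Matrix.det (evalMat_eq hlam h1 κ hs hs')
  rw [Matrix.det_mul, det_block, Matrix.det_diagonal, Fintype.prod_sum_type] at hE
  simp only [Sum.elim_inl, Sum.elim_inr, prod_mul_distrib] at hE
  rw [← hE, ← Matrix.det_submatrix_equiv_self (blockEquiv N).symm]
  have hdeg : ∀ k, (Sum.elim (polyA e κ lam mu) (polyB e lam mu)
      ((blockEquiv N).symm k)).natDegree < 2 * N := by
    intro k
    rcases (blockEquiv N).symm k with k | k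
    · exact natDegree_polyA_lt _ _ _ _ _
    · exact natDegree_polyB_lt _ _ _ _
  have hev := det_eval_eq
    (Sum.elim (fun j => -lam j + e / 2) (fun j => -lam j + -(e / 2)) ∘ (blockEquiv N).symm)
    (fun k => Sum.elim (polyA e κ lam mu) (polyB e lam mu) ((blockEquiv N).symm k)) hdeg
  rw [det_vandermonde_sum, vandermonde_det_eq, vandermonde_det_eq] at hev
  have hX : ∏ i, ∏ j, (-lam j + -(e / 2) - (-lam i + e / 2)) =
      ∏ j, ∏ a, (lam a - (lam j + e)) := by
    rw [prod_comm]
    exact prod_congr rfl fun _ _ => prod_congr rfl fun _ _ => by ring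
  rw [hX] at hev
  exact hev.symm

/-! ### The reduced determinant -/

/-- The `N × N` matrix of the reduced determinant, in terms of `ψ`. -/
noncomputable def redMat {N : ℕ} (e κ : ℂ) (lam mu : Fin N → ℂ) : Matrix (Fin N) (Fin N) ℂ :=
  Matrix.of fun j k =>
    κ * (ratioFn lam mu (lam j + -e) / ratioFn lam mu (lam j + e)) *
      (e ^ 2 / ((mu k - lam j) * (mu k - lam j + e))) +
    e ^ 2 / ((lam j - mu k) * (lam j - mu k + e))

/-- Multiplying `Q - κ P` by the weighted Cauchy matrix gives the reduced matrix up to row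
factors. -/
lemma det_shiftMat_mul {N : ℕ} {lam mu : Fin N → ℂ} (hlam : Function.Injective lam)
    (h1 : ∀ a b, mu a ≠ lam b) {e : ℂ} (κ : ℂ) (hs : ∀ a b, lam a ≠ lam b + e)
    (hs' : ∀ a b, lam a ≠ lam b + -e) (hm : ∀ a b, mu a ≠ lam b + e)
    (hm' : ∀ a b, mu a ≠ lam b + -e) :
    (shiftMat lam mu e - κ • shiftMat lam mu (-e)).det *
      ((∏ j, resWeight lam mu j) * (cauchyMat lam mu).det) =
    (∏ j, ratioFn lam mu (lam j + e) / e) * (redMat e κ lam mu).det := by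
  rw [← Matrix.det_diagonal, ← Matrix.det_diagonal, ← Matrix.det_mul, ← Matrix.det_mul,
    ← Matrix.det_mul]
  congr 1
  ext j k
  rw [Matrix.sub_mul, Matrix.smul_mul, Matrix.sub_apply, Matrix.smul_apply,
    shiftMat_mul hlam h1 hs hm, shiftMat_mul hlam h1 hs' hm', Matrix.diagonal_mul, redMat,
    Matrix.of_apply, smul_eq_mul]
  have hψ : ratioFn lam mu (lam j + e) ≠ 0 :=
    div_ne_zero (prod_ne_zero_iff.2 fun a _ => sub_ne_zero.2 (hm a j))
      (prod_ne_zero_iff.2 fun a _ => sub_ne_zero.2 (hs a j))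
  generalize ratioFn lam mu (lam j + e) = p at hψ
  generalize ratioFn lam mu (lam j + -e) = q
  have n1 : mu k - lam j ≠ 0 := sub_ne_zero.2 (h1 k j)
  have n2 : mu k - lam j - e ≠ 0 := by rw [sub_sub]; exact sub_ne_zero.2 (hm k j)
  have n3 : mu k - lam j + e ≠ 0 := by
    have := sub_ne_zero.2 (hm' k j)
    rwa [← sub_sub, sub_neg_eq_add] at this
  have e1 : mu k - (lam j + e) = mu k - lam j - e := by ring
  have e2 : mu k - (lam j + -e) = mu k - lam j + e := by ring
  have e3 : (lam j - mu k) * (lam j - mu k + e) = (mu k - lam j) * (mu k - lam j - e) := by ring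
  rw [e1, e2, e3]
  generalize mu k - lam j = d at *
  field_simp
  ring

/-- The reduction, in terms of `e = ic`. -/
lemma det_omegaMat {N : ℕ} {lam mu : Fin N → ℂ} (hlam : Function.Injective lam)
    (hmu : Function.Injective mu)
    (h1 : ∀ a b, mu a ≠ lam b) {e : ℂ} (he : e ≠ 0) (κ : ℂ) (hs : ∀ a b, lam a ≠ lam b + e)
    (hs' : ∀ a b, lam a ≠ lam b + -e) (hm : ∀ a b, mu a ≠ lam b + e)
    (hm' : ∀ a b, mu a ≠ lam b + -e) :
    (omegaMat e κ lam mu).det =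
      (∏ a : Fin N, ∏ b ∈ univ.filter (· < a), (mu a - mu b)) *
      (∏ a : Fin N, ∏ b ∈ univ.filter (· < a), (lam a - lam b)) *
      (∏ a : Fin N, ∏ b : Fin N, (mu a - lam b)) *
      (∏ a : Fin N, ∏ b ∈ univ.filter (· < a),
        (e / (lam a - lam b)) * (e / (mu b - mu a))) *
      (∏ a : Fin N, ∏ b : Fin N, ((lam a - mu b + e) / e)) * (redMat e κ lam mu).det := by
  have k1 := vandermonde_mul_det_omegaMat hlam h1 κ hs hs'
  have k2 := det_shiftMat_mul hlam h1 κ hs hs' hm hm'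
  have hW : ∏ j, resWeight lam mu j = (∏ j, ∏ a, (mu a - lam j)) /
      ((∏ a, ∏ b ∈ univ.filter (· < a), (lam a - lam b)) *
        ∏ a, ∏ b ∈ univ.filter (· < a), (lam b - lam a)) := by
    simp only [resWeight, prod_div_distrib]
    rw [← prod_offdiag fun b a => lam b - lam a]
  have hψ : ∏ j, ratioFn lam mu (lam j + e) / e =
      (∏ a, ∏ b, (lam a - mu b + e)) / (∏ j, ∏ a, (lam a - (lam j + -e))) / e ^ N := by
    rw [prod_div_distrib, prod_const, card_univ, Fintype.card_fin]
    congr 1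
    rw [prod_comm (f := fun j a => lam a - (lam j + -e)), ← prod_div_distrib]
    refine prod_congr rfl fun j _ => ?_
    rw [ratioFn, ← prod_div_distrib, ← prod_div_distrib]
    refine prod_congr rfl fun a _ => ?_
    rw [← neg_div_neg_eq]
    congr 1 <;> ring
  -- reversing every difference in `Δ(λ)` costs a sign, which cancels the one in `hG`
  have hsg : (∏ a, ∏ b ∈ univ.filter (· < a), (lam a - lam b)) =
      (∏ a : Fin N, ∏ b ∈ univ.filter (· < a), (-1 : ℂ)) *
        ∏ a, ∏ b ∈ univ.filter (· < a), (lam b - lam a) := by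
    simp only [← prod_mul_distrib]
    exact prod_congr rfl fun _ _ => prod_congr rfl fun _ _ => by ring
  have hG : (∏ a : Fin N, ∏ b ∈ univ.filter (· < a), (mu a - mu b)) *
      (∏ a : Fin N, ∏ b ∈ univ.filter (· < a), (lam a - lam b)) *
      (∏ a : Fin N, ∏ b ∈ univ.filter (· < a), (e / (lam a - lam b)) * (e / (mu b - mu a))) =
      (∏ a : Fin N, ∏ b ∈ univ.filter (· < a), (-1 : ℂ)) *
        ∏ a : Fin N, ∏ b ∈ univ.filter (· < a), e * e := by
    simp only [← prod_mul_distrib]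
    refine prod_congr rfl fun a _ => prod_congr rfl fun b hb => ?_
    have hb' : b < a := (mem_filter.1 hb).2
    have n1 : lam a - lam b ≠ 0 := sub_ne_zero.2 (hlam.ne hb'.ne')
    have n2 : mu b - mu a ≠ 0 := sub_ne_zero.2 (hmu.ne hb'.ne)
    field_simp
    ring
  have hE : ∏ a : Fin N, ∏ b : Fin N, e =
      (∏ a : Fin N, ∏ b ∈ univ.filter (· < a), e * e) * e ^ N := by
    have h := prod_offdiag (N := N) fun _ _ => e
    simp only [prod_mul_distrib]
    rw [← h]
    have : e ^ N = ∏ a : Fin N, e := by simp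
    rw [this, ← prod_mul_distrib]
    exact prod_congr rfl fun a _ => (prod_erase_mul univ _ (mem_univ a)).symm
  have hM : ∏ a, ∏ b, (mu a - lam b) = ∏ j, ∏ a, (mu a - lam j) := prod_comm
  have hH : (∏ a : Fin N, ∏ b : Fin N, ((lam a - mu b + e) / e)) =
      (∏ a, ∏ b, (lam a - mu b + e)) / ∏ a : Fin N, ∏ b : Fin N, e := by
    simp only [prod_div_distrib]
  have nS : ∏ a, ∏ b ∈ univ.filter (· < a), (lam b - lam a) ≠ 0 :=
    prod_ne_zero_iff.2 fun a _ => prod_ne_zero_iff.2 fun b hb =>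
      sub_ne_zero.2 (hlam.ne (mem_filter.1 hb).2.ne)
  have nsg : ∏ a : Fin N, ∏ b ∈ univ.filter (· < a), (-1 : ℂ) ≠ 0 :=
    prod_ne_zero_iff.2 fun a _ => prod_ne_zero_iff.2 fun b _ => by norm_num
  have nE : ∏ a : Fin N, ∏ b ∈ univ.filter (· < a), e * e ≠ 0 :=
    prod_ne_zero_iff.2 fun a _ => prod_ne_zero_iff.2 fun b _ => mul_ne_zero he he
  have nM : ∏ j, ∏ a, (mu a - lam j) ≠ 0 :=
    prod_ne_zero_iff.2 fun j _ => prod_ne_zero_iff.2 fun a _ => sub_ne_zero.2 (h1 a j)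
  have nLp : ∏ j, ∏ a, (lam a - (lam j + -e)) ≠ 0 :=
    prod_ne_zero_iff.2 fun j _ => prod_ne_zero_iff.2 fun a _ => sub_ne_zero.2 (hs' a j)
  have nLm : ∏ j, ∏ a, (lam a - (lam j + e)) ≠ 0 :=
    prod_ne_zero_iff.2 fun j _ => prod_ne_zero_iff.2 fun a _ => sub_ne_zero.2 (hs a j)
  have nN : e ^ N ≠ 0 := pow_ne_zero _ he
  rw [hW, hψ, hsg] at k2
  have hfin : ∀ a b m g h d : ℂ, a * b * m * g * h * d = a * b * g * m * h * d := by
    intros; ring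
  rw [hfin, hG, hM, hH, hE]
  clear hfin hG hM hH hE hψ hW hsg
  generalize (omegaMat e κ lam mu).det = dO at *
  generalize (redMat e κ lam mu).det = dT at *
  generalize (cauchyMat lam mu).det = dC at *
  generalize (shiftMat lam mu e - κ • shiftMat lam mu (-e)).det = dK at *
  generalize ∏ a, ∏ b ∈ univ.filter (· < a), (lam b - lam a) = S at *
  generalize ∏ a : Fin N, ∏ b ∈ univ.filter (· < a), (-1 : ℂ) = sg at *
  generalize ∏ a : Fin N, ∏ b ∈ univ.filter (· < a), e * e = E2 at *
  generalize ∏ j, ∏ a, (mu a - lam j) = M at *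
  generalize ∏ j, ∏ a, (lam a - (lam j + -e)) = Lp at *
  generalize ∏ j, ∏ a, (lam a - (lam j + e)) = Lm at *
  generalize ∏ a, ∏ b, (lam a - mu b + e) = H at *
  generalize e ^ N = eN at *
  have k3 : dK * dC * M * Lp * eN = sg * S * S * H * dT := by
    field_simp at k2
    linear_combination k2
  have k4 : dO * eN = sg * M * H * dT := by
    have : S * S * Lm ≠ 0 := mul_ne_zero (mul_ne_zero nS nS) nLm
    apply mul_left_cancel₀ this
    linear_combination eN * k1 + M * Lm * k3
  field_simp
  linear_combination k4

/-- Theorem 1 of the paper: the 2N×2N determinant of the matrix Ω, whose entries are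
elementary symmetric polynomials (coefficients of `∏ (X + x_m)`), equals
`Δ(μ)Δ(λ)∏(μ_a-λ_b)` times the prefactors and the N×N determinant
`det(κ V_j t(μ_k,λ_j) + t(λ_j,μ_k))`.  Rows of Ω are indexed by `j = 0,…,2N-1`
(the coefficient degree), columns `k < N` form the first block, columns `k ≥ N`
the second block. -/
theorem sigma_det_reduction (N : ℕ) (hN : 1 ≤ N) (c : ℂ) (hc : c ≠ 0) (κ : ℂ)
    (lam mu : Fin N → ℂ)
    (hlam : ∀ a b : Fin N, a ≠ b → lam a ≠ lam b)
    (hmu : ∀ a b : Fin N, a ≠ b → mu a ≠ mu b)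
    (h1 : ∀ a b : Fin N, mu a ≠ lam b)
    (h2 : ∀ a b : Fin N, mu a - lam b + I * c ≠ 0)
    (h3 : ∀ a b : Fin N, lam a - mu b + I * c ≠ 0)
    (h4 : ∀ a b : Fin N, lam a - lam b + I * c ≠ 0) :
    Matrix.det (Matrix.of fun j k : Fin (2 * N) =>
      if hk : (k : ℕ) < N then
        ((∏ a ∈ univ.erase (⟨(k : ℕ), hk⟩ : Fin N),
              (Polynomial.X + Polynomial.C (mu a - I * c / 2))) *
            ∏ a : Fin N, (Polynomial.X + Polynomial.C (lam a + I * c / 2))).coeff (j : ℕ) -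
          κ * ((∏ a ∈ univ.erase (⟨(k : ℕ), hk⟩ : Fin N),
              (Polynomial.X + Polynomial.C (mu a + I * c / 2))) *
            ∏ a : Fin N, (Polynomial.X + Polynomial.C (lam a - I * c / 2))).coeff (j : ℕ)
      else
        ((∏ a : Fin N, (Polynomial.X + Polynomial.C (mu a + I * c / 2))) *
            ∏ a ∈ univ.erase (⟨(k : ℕ) - N, by have := k.isLt; omega⟩ : Fin N),
              (Polynomial.X + Polynomial.C (lam a - I * c / 2))).coeff (j : ℕ) -
          ((∏ a : Fin N, (Polynomial.X + Polynomial.C (mu a - I * c / 2))) *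
            ∏ a ∈ univ.erase (⟨(k : ℕ) - N, by have := k.isLt; omega⟩ : Fin N),
              (Polynomial.X + Polynomial.C (lam a + I * c / 2))).coeff (j : ℕ)) =
    (∏ a : Fin N, ∏ b ∈ univ.filter (· < a), (mu a - mu b)) *
      (∏ a : Fin N, ∏ b ∈ univ.filter (· < a), (lam a - lam b)) *
      (∏ a : Fin N, ∏ b : Fin N, (mu a - lam b)) *
      (∏ a : Fin N, ∏ b ∈ univ.filter (· < a), gRat c (lam a) (lam b) * gRat c (mu b) (mu a)) *
      (∏ a : Fin N, ∏ b : Fin N, hRat c (lam a) (mu b)) *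
      Matrix.det (Matrix.of fun j k : Fin N =>
        κ * (∏ m : Fin N,
              (hRat c (mu m) (lam j) * hRat c (lam j) (lam m)) /
                (hRat c (lam j) (mu m) * hRat c (lam m) (lam j))) *
            tRat c (mu k) (lam j) +
          tRat c (lam j) (mu k)) := by
  have he : I * c ≠ 0 := mul_ne_zero I_ne_zero hc
  have hlam' : Function.Injective lam := fun a b h => by_contra fun hab => hlam a b hab h
  have hmu' : Function.Injective mu := fun a b h => by_contra fun hab => hmu a b hab h
  have hs : ∀ a b, lam a ≠ lam b + I * c := fun a b h => h4 b a (by rw [h]; ring)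
  have hs' : ∀ a b, lam a ≠ lam b + -(I * c) := fun a b h => h4 a b (by rw [h]; ring)
  have hm : ∀ a b, mu a ≠ lam b + I * c := fun a b h => h3 b a (by rw [h]; ring)
  have hm' : ∀ a b, mu a ≠ lam b + -(I * c) := fun a b h => h2 a b (by rw [h]; ring)
  have key := det_omegaMat hlam' hmu' h1 he κ hs hs' hm hm'
  have hred : redMat (I * c) κ lam mu = Matrix.of fun j k : Fin N =>
        κ * (∏ m : Fin N,
              (hRat c (mu m) (lam j) * hRat c (lam j) (lam m)) /
                (hRat c (lam j) (mu m) * hRat c (lam m) (lam j))) *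
            tRat c (mu k) (lam j) +
          tRat c (lam j) (mu k) := by
    ext j k
    have hV : ∏ m : Fin N, (hRat c (mu m) (lam j) * hRat c (lam j) (lam m)) /
        (hRat c (lam j) (mu m) * hRat c (lam m) (lam j)) =
        ratioFn lam mu (lam j + -(I * c)) / ratioFn lam mu (lam j + I * c) := by
      simp only [ratioFn, ← prod_div_distrib]
      refine prod_congr rfl fun m _ => ?_
      have e1 : mu m - (lam j + -(I * c)) = mu m - lam j + I * c := by ring
      have e2 : lam m - (lam j + -(I * c)) = lam m - lam j + I * c := by ring
      have e3 : mu m - (lam j + I * c) = -(lam j - mu m + I * c) := by ring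
      have e4 : lam m - (lam j + I * c) = -(lam j - lam m + I * c) := by ring
      rw [e1, e2, e3, e4, neg_div_neg_eq]
      simp only [hRat]
      have n1 := h4 m j
      have n2 := h4 j m
      have n3 := h3 j m
      generalize lam m - lam j + I * c = x1 at *
      generalize lam j - lam m + I * c = x2 at *
      generalize lam j - mu m + I * c = x3 at *
      generalize I * c = e at *
      field_simp
    have hc2 : -c ^ 2 = (I * c) ^ 2 := by rw [mul_pow, I_sq]; ring
    simp only [redMat, Matrix.of_apply, tRat, hV, hc2]
  rw [← hred]
  simp only [gRat, hRat]
  rw [← key]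
  congr 1
  ext j k
  obtain ⟨k, rfl⟩ := (blockEquiv N).surjective k
  rcases k with k | k
  · have hk : ((blockEquiv N (Sum.inl k) : Fin (2 * N)) : ℕ) < N := by
      rw [blockEquiv_inl_val]; exact k.isLt
    have hk' : (⟨(blockEquiv N (Sum.inl k) : Fin (2 * N)), hk⟩ : Fin N) = k :=
      Fin.ext (blockEquiv_inl_val k)
    simp only [Matrix.of_apply, omegaMat, Equiv.symm_apply_apply, Sum.elim_inl, polyA,
      Polynomial.coeff_sub, Polynomial.coeff_C_mul, dif_pos hk, hk']
  · have hk : ¬ ((blockEquiv N (Sum.inr k) : Fin (2 * N)) : ℕ) < N := by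
      rw [blockEquiv_inr_val]; omega
    have hk' : ∀ h, (⟨((blockEquiv N (Sum.inr k) : Fin (2 * N)) : ℕ) - N, h⟩ : Fin N) = k :=
      fun h => Fin.ext (by simp [blockEquiv_inr_val])
    simp only [Matrix.of_apply, omegaMat, Equiv.symm_apply_apply, Sum.elim_inr, polyB,
      Polynomial.coeff_sub, dif_neg hk, hk']
end
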